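/- arXiv:2308.01259 — 3 statements merged into one kernel-verified Lean document; each statement's English description precedes it below -/
import Mathlib

section
/- Let L be a T1 topological space with more than one point and let κ be an infinite cardinal with d(L) ≤ κ. Then there exists a subset X of the product space L^(2^κ) such that X is κ-dense in L^(2^κ), |X| = κ, the subspace X is crowded with Δ(X) = κ, and every dense subset of the subspace X is open in X (i.e., X is submaximal). -/
open Cardinal

/-- A subset `A` of a topological space `Y` is `κ`-dense if `|A ∩ U| ≥ κ`
for every nonempty open `U ⊆ Y`. -/
def KDense {Y : Type*} [TopologicalSpace Y] (κ : Cardinal) (A : Set Y) : Prop :=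
  ∀ U : Set Y, IsOpen U → U.Nonempty → κ ≤ #↥(A ∩ U)

/-- The density of a topological space: the smallest cardinality of a dense subset. -/
noncomputable def density (X : Type u) [TopologicalSpace X] : Cardinal.{u} :=
  sInf {c : Cardinal.{u} | ∃ s : Set X, Dense s ∧ #s = c}

/-- The dispersion character of a space: the smallest cardinality of a nonempty
open subset. -/
noncomputable def dispersion (X : Type u) [TopologicalSpace X] : Cardinal.{u} :=
  sInf {c : Cardinal.{u} | ∃ U : Set X, IsOpen U ∧ U.Nonempty ∧ #U = c}

/-- Hewitt–Marczewski–Pondiczery with multiplicities. -/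
lemma exists_kdense_family {L : Type u} [TopologicalSpace L] (hL : Nontrivial L)
    (κ : Cardinal.{u}) (hκ : ℵ₀ ≤ κ) (hd : density L ≤ κ) (J : Type u) (hJ : #J = 2 ^ κ) :
    ∃ x : κ.out → (J → L), ∀ U : Set (J → L), IsOpen U → U.Nonempty →
      κ ≤ #{a | x a ∈ U} := by
  classical
  have hK : #κ.out = κ := Cardinal.mk_out κ
  generalize κ.out = K at hK
  have hKi : Infinite K := by rw [Cardinal.infinite_iff, hK]; exact hκ
  -- a map with dense range
  obtain ⟨e, he⟩ : ∃ e : K → L, DenseRange e := by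
    have hne : {c : Cardinal.{u} | ∃ s : Set L, Dense s ∧ #s = c}.Nonempty :=
      ⟨_, Set.univ, dense_univ, rfl⟩
    obtain ⟨s, hs, hc⟩ := csInf_mem hne
    have hle : #s ≤ #K := by rw [hc, hK]; exact hd
    obtain ⟨f⟩ := hle
    have : Nonempty s := hs.nonempty.to_subtype
    refine ⟨fun k => ((Function.invFun f k : s) : L), ?_⟩
    refine hs.mono ?_
    intro y hy
    exact ⟨f ⟨y, hy⟩, by
      dsimp only
      rw [Function.leftInverse_invFun f.injective]⟩
  obtain ⟨φ⟩ : Nonempty (J ≃ Set K) := by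
    rw [← Cardinal.eq, hJ, Cardinal.mk_set, hK]
  let P := Finset K × Finset (Finset K × K) × K
  have hP : #P = κ := by
    have h1 : #(Finset K × K) = κ := by
      simp [hK, Cardinal.mul_eq_self hκ]
    have h2 : #(Finset (Finset K × K)) = κ := by
      rw [Cardinal.mk_finset_of_infinite, h1]
    simp only [P, Cardinal.mk_prod, Cardinal.lift_id, h2, Cardinal.mk_finset_of_infinite, hK,
      Cardinal.mul_eq_self hκ]
  obtain ⟨ψ⟩ : Nonempty (K ≃ P) := by rw [← Cardinal.eq, hP, hK]
  let k0 : K := Classical.arbitrary K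
  let v : P → J → L := fun p j =>
    if h : ∃ k, (p.1.filter (· ∈ φ j), k) ∈ p.2.1 then e h.choose else e k0
  refine ⟨fun a => v (ψ a), ?_⟩
  intro U hU ⟨z, hz⟩
  obtain ⟨t, w, hw, htw⟩ := isOpen_pi_iff.1 hU z hz
  have hch : ∀ j : J, ∃ k : K, j ∈ t → e k ∈ w j := by
    intro j
    by_cases hj : j ∈ t
    · obtain ⟨k, hk⟩ := he.exists_mem_open (hw j hj).1 ⟨_, (hw j hj).2⟩
      exact ⟨k, fun _ => hk⟩
    · exact ⟨k0, fun h => absurd h hj⟩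
  choose g hg using hch
  have hsep : ∀ i j : J, ∃ k : K, i ≠ j → ¬ (k ∈ φ i ↔ k ∈ φ j) := by
    intro i j
    by_cases hij : i = j
    · exact ⟨k0, fun h => absurd hij h⟩
    · by_contra hcon
      push Not at hcon
      apply hij
      apply φ.injective
      ext k
      exact (hcon k).2
  choose sep hsep using hsep
  let F : Finset K := (t ×ˢ t).image fun p => sep p.1 p.2
  have hF : ∀ i ∈ t, ∀ j ∈ t, F.filter (· ∈ φ i) = F.filter (· ∈ φ j) → i = j := by
    intro i hi j hj h
    by_contra hij
    have hm : sep i j ∈ F := Finset.mem_image.2 ⟨(i, j), Finset.mem_product.2 ⟨hi, hj⟩, rfl⟩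
    apply hsep i j hij
    have := Finset.ext_iff.1 h (sep i j)
    simpa [hm] using this
  let S : Finset (Finset K × K) := t.image fun j => (F.filter (· ∈ φ j), g j)
  have hv : ∀ k : K, v (F, S, k) ∈ U := by
    intro k
    apply htw
    intro j hj
    have hex : ∃ k, (F.filter (· ∈ φ j), k) ∈ S :=
      ⟨g j, Finset.mem_image.2 ⟨j, hj, rfl⟩⟩
    have h1 : v (F, S, k) j = e hex.choose := dif_pos hex
    rw [h1]
    obtain ⟨i, hi, hie⟩ := Finset.mem_image.1 hex.choose_spec
    have h2 := (Prod.ext_iff.1 hie).1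
    have h3 := (Prod.ext_iff.1 hie).2
    have hij := hF i hi j hj h2
    subst hij
    dsimp only at h3
    rw [← h3]
    exact hg i hj
  rw [← hK]
  refine Cardinal.mk_le_of_injective (f := fun k : K =>
    (⟨ψ.symm (F, S, k), by simpa using hv k⟩ : {a | v (ψ a) ∈ U})) ?_
  intro k k' h
  have h2 := ψ.symm.injective (congrArg Subtype.val h)
  exact congrArg (fun c : P => c.2.2) h2

/-- If `L` is a T1 space with more than one point and `κ` is an
infinite cardinal with `d(L) ≤ κ`, then `L^(2^κ)` has a κ-dense subspace `X` of
cardinality `κ` which is crowded (no isolated points), has dispersion character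
`κ`, and is submaximal: every subset dense in `X` is open in `X`. -/
theorem stmt3 {L : Type u} [TopologicalSpace L] [T1Space L] (hL : Nontrivial L)
    (κ : Cardinal.{u}) (hκ : ℵ₀ ≤ κ) (hd : density L ≤ κ) :
    ∃ X : Set (((2 : Cardinal.{u}) ^ κ).out → L),
      KDense κ X ∧ #X = κ ∧
      (∀ x : X, ¬ IsOpen ({x} : Set X)) ∧
      dispersion X = κ ∧
      (∀ D : Set X, Dense D → IsOpen D) := by
  classical
  have hJ : #((2 : Cardinal.{u}) ^ κ).out = 2 ^ κ := Cardinal.mk_out _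
  generalize ((2 : Cardinal.{u}) ^ κ).out = J at hJ
  obtain ⟨x, hx⟩ := exists_kdense_family hL κ hκ hd J hJ
  have hK : #κ.out = κ := Cardinal.mk_out κ
  generalize κ.out = K at hK x hx
  have hKi : Infinite K := by rw [Cardinal.infinite_iff, hK]; exact hκ
  obtain ⟨p, q, hpq⟩ := hL
  -- the maximal ideal
  let Good : Set (Set (Set K)) := {I | (∀ A : Set K, #A < κ → A ∈ I) ∧
    (∀ A ∈ I, ∀ B, B ⊆ A → B ∈ I) ∧ (∀ A ∈ I, ∀ B ∈ I, A ∪ B ∈ I) ∧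
    ∀ U : Set (J → L), IsOpen U → U.Nonempty → {a | x a ∈ U} ∉ I}
  have hI0 : {A : Set K | #A < κ} ∈ Good := by
    refine ⟨fun A h => h, fun A hA B hBA => (Cardinal.mk_le_mk_of_subset hBA).trans_lt hA,
      fun A hA B hB => (Cardinal.mk_union_le A B).trans_lt (Cardinal.add_lt_of_lt hκ hA hB), ?_⟩
    intro U hU hne h
    exact absurd h (not_lt.2 (hx U hU hne))
  obtain ⟨I, -, hImax⟩ := zorn_subset_nonempty Good (by
    intro c hc hchain hne
    refine ⟨⋃₀ c, ⟨?_, ?_, ?_, ?_⟩, fun s hs => Set.subset_sUnion_of_mem hs⟩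
    · obtain ⟨s, hs⟩ := hne
      exact fun A hA => ⟨s, hs, (hc hs).1 A hA⟩
    · rintro A ⟨s, hs, hA⟩ B hB
      exact ⟨s, hs, (hc hs).2.1 A hA B hB⟩
    · rintro A ⟨s, hs, hA⟩ B ⟨s', hs', hB⟩
      rcases hchain.total hs hs' with h | h
      · exact ⟨s', hs', (hc hs').2.2.1 A (h hA) B hB⟩
      · exact ⟨s, hs, (hc hs).2.2.1 A hA B (h hB)⟩
    · rintro U hU hne' ⟨s, hs, h⟩
      exact (hc hs).2.2.2 U hU hne' h) _ hI0
  obtain ⟨hsmall, hsub, hun, hpos⟩ := hImax.prop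
  have hsing : ∀ a : K, ({a} : Set K) ∈ I := fun a => hsmall _ (by
    rw [Cardinal.mk_singleton]; exact Cardinal.one_lt_aleph0.trans_le hκ)
  have hempty : (∅ : Set K) ∈ I := hsmall _ (by
    rw [Cardinal.mk_eq_zero]; exact Cardinal.aleph0_pos.trans_le hκ)
  have hmaxI : ∀ C : Set K, C ∉ I → ∃ U : Set (J → L), IsOpen U ∧ U.Nonempty ∧
      ∃ N ∈ I, {a | x a ∈ U} ⊆ C ∪ N := by
    intro C hC
    by_contra hcon
    push Not at hcon
    have hG : {A : Set K | ∃ N ∈ I, A ⊆ C ∪ N} ∈ Good := by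
      refine ⟨fun A hA => ⟨A, hsmall A hA, Set.subset_union_right⟩, ?_, ?_, ?_⟩
      · rintro A ⟨N, hN, hA⟩ B hB
        exact ⟨N, hN, hB.trans hA⟩
      · rintro A ⟨N, hN, hA⟩ B ⟨N', hN', hB⟩
        refine ⟨N ∪ N', hun _ hN _ hN', ?_⟩
        intro a ha
        rcases ha with ha | ha
        · rcases hA ha with h | h
          · exact Or.inl h
          · exact Or.inr (Or.inl h)
        · rcases hB ha with h | h
          · exact Or.inl h
          · exact Or.inr (Or.inr h)
      · rintro U hU hne ⟨N, hN, h⟩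
        exact hcon U hU hne N hN h
    have hle := hImax.le_of_ge hG (fun A hA => ⟨A, hA, Set.subset_union_right⟩)
    exact hC (hle ⟨∅, hempty, by simp⟩)
  -- modification
  obtain ⟨φ⟩ : Nonempty (J ≃ Set K × K) := by
    rw [← Cardinal.eq, hJ, Cardinal.mk_prod, Cardinal.lift_id, Cardinal.lift_id,
      Cardinal.mk_set, hK]
    exact (Cardinal.mul_eq_left (hκ.trans (Cardinal.cantor κ).le) (Cardinal.cantor κ).le
      (Cardinal.aleph0_pos.trans_le hκ).ne').symm
  let y : K → J → L := fun a j =>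
    if (φ j).1 ∈ I ∧ (φ j).2 ∉ (φ j).1 then
      (if a ∈ (φ j).1 then p else if a = (φ j).2 then q else x a j) else x a j
  have hy : ∀ N ∈ I, ∀ b ∉ N, ∃ j : J, (∀ a ∈ N, y a j = p) ∧ y b j = q := by
    intro N hN b hb
    refine ⟨φ.symm (N, b), ?_, ?_⟩
    · intro a ha
      simp [y, hN, hb, ha]
    · simp [y, hN, hb]
  have hdiff : ∀ j, ∃ M ∈ I, ∀ a ∉ M, y a j = x a j := by
    intro j
    by_cases h : (φ j).1 ∈ I ∧ (φ j).2 ∉ (φ j).1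
    · refine ⟨(φ j).1 ∪ {(φ j).2}, hun _ h.1 _ (hsing _), ?_⟩
      intro a ha
      have h1 : a ∉ (φ j).1 := fun h => ha (Or.inl h)
      have h2 : a ≠ (φ j).2 := fun h => ha (Or.inr h)
      simp only [y, if_pos h, if_neg h1, if_neg h2]
    · exact ⟨∅, hempty, fun a _ => by simp only [y, if_neg h]⟩
  have hdiffF : ∀ t : Finset J, ∃ M ∈ I, ∀ a ∉ M, ∀ j ∈ t, y a j = x a j := by
    intro t
    induction t using Finset.induction_on with
    | empty => exact ⟨∅, hempty, by simp⟩
    | insert j t _ ih =>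
      obtain ⟨M, hM, h⟩ := ih
      obtain ⟨M', hM', h'⟩ := hdiff j
      refine ⟨M ∪ M', hun _ hM _ hM', ?_⟩
      intro a ha i hi
      rcases Finset.mem_insert.1 hi with rfl | hi
      · exact h' a fun h => ha (Or.inr h)
      · exact h a (fun h => ha (Or.inl h)) i hi
  have hbox : ∀ U : Set (J → L), IsOpen U → U.Nonempty → ∃ V : Set (J → L), IsOpen V ∧
      V.Nonempty ∧ V ⊆ U ∧ ∃ M ∈ I, ∀ a ∉ M, (y a ∈ V ↔ x a ∈ V) := by
    intro U hU ⟨z, hz⟩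
    obtain ⟨t, w, hw, htw⟩ := isOpen_pi_iff.1 hU z hz
    obtain ⟨M, hM, h⟩ := hdiffF t
    refine ⟨(t : Set J).pi w, isOpen_set_pi t.finite_toSet fun i hi => (hw i hi).1,
      ⟨z, fun i hi => (hw i hi).2⟩, htw, M, hM, ?_⟩
    intro a ha
    simp only [Set.mem_pi]
    refine forall₂_congr fun i hi => ?_
    rw [h a ha i hi]
  have hypos : ∀ U : Set (J → L), IsOpen U → U.Nonempty → {a | y a ∈ U} ∉ I := by
    intro U hU hne h
    obtain ⟨V, hV, hVne, hVU, M, hM, hVM⟩ := hbox U hU hne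
    refine hpos V hV hVne (hsub _ (hun _ h _ hM) _ ?_)
    intro a ha
    by_cases haM : a ∈ M
    · exact Or.inr haM
    · exact Or.inl (hVU ((hVM a haM).2 ha))
  have hinj : Function.Injective y := by
    intro a b hab
    by_contra hne
    obtain ⟨j, h1, h2⟩ := hy {a} (hsing a) b (fun h => hne (Set.mem_singleton_iff.1 h).symm)
    have := h1 a rfl
    rw [hab, h2] at this
    exact hpq this.symm
  have hkd : KDense κ (Set.range y) := by
    intro U hU hne
    have h1 : κ ≤ #{a | y a ∈ U} := by
      by_contra h
      exact hypos U hU hne (hsmall _ (not_le.1 h))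
    refine h1.trans (Cardinal.mk_le_of_injective (f := fun a : {a | y a ∈ U} =>
      (⟨y a, ⟨⟨a, rfl⟩, a.2⟩⟩ : ↥(Set.range y ∩ U))) ?_)
    intro a b h
    exact Subtype.ext (hinj (congrArg Subtype.val h))
  have hcard : #(Set.range y) = κ := by rw [Cardinal.mk_range_eq y hinj, hK]
  have hopen : ∀ W : Set (Set.range y), IsOpen W → W.Nonempty → κ ≤ #W := by
    rintro W hW ⟨z, hz⟩
    obtain ⟨U, hU, rfl⟩ := isOpen_induced_iff.1 hW
    refine (hkd U hU ⟨z, hz⟩).trans (Cardinal.mk_le_of_injective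
      (f := fun a : ↥(Set.range y ∩ U) =>
        (⟨⟨a, a.2.1⟩, a.2.2⟩ : ↥((Subtype.val : Set.range y → _) ⁻¹' U))) ?_)
    intro a b h
    have := congrArg Subtype.val (congrArg Subtype.val h)
    exact Subtype.ext this
  refine ⟨Set.range y, hkd, hcard, ?_, ?_, ?_⟩
  · intro z hz
    have := hopen _ hz ⟨z, rfl⟩
    rw [Cardinal.mk_singleton] at this
    exact absurd (hκ.trans this) (not_le.2 Cardinal.one_lt_aleph0)
  · have hne : Nonempty (Set.range y) := (Set.range_nonempty y).to_subtype
    have hmem : κ ∈ {c : Cardinal.{u} | ∃ U : Set (Set.range y),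
        IsOpen U ∧ U.Nonempty ∧ #U = c} :=
      ⟨Set.univ, isOpen_univ, Set.univ_nonempty, by rw [Cardinal.mk_univ, hcard]⟩
    apply le_antisymm
    · exact csInf_le' hmem
    · refine le_csInf ⟨κ, hmem⟩ ?_
      rintro c ⟨U, hU, hUne, rfl⟩
      exact hopen U hU hUne
  · intro D hD
    have hcoord : ∀ j : J, IsOpen {z : J → L | z j ≠ p} := fun j =>
      isOpen_compl_singleton.preimage (continuous_apply j)
    let C : Set K := {a | (⟨y a, a, rfl⟩ : Set.range y) ∉ D}
    by_cases hC : C ∈ I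
    · rw [isOpen_iff_forall_mem_open]
      rintro ⟨_, b, rfl⟩ hb
      obtain ⟨j, h1, h2⟩ := hy C hC b (fun h => h hb)
      refine ⟨Subtype.val ⁻¹' {z : J → L | z j ≠ p}, ?_,
        (hcoord j).preimage continuous_subtype_val, ?_⟩
      · rintro ⟨_, a, rfl⟩ ha
        by_contra hcon
        exact ha (h1 a hcon)
      · change y b j ≠ p
        rw [h2]; exact hpq.symm
    · exfalso
      obtain ⟨U, hU, hUne, N, hN, hUN⟩ := hmaxI C hC
      obtain ⟨V, hV, hVne, hVU, M, hM, hVM⟩ := hbox U hU hUne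
      have hNM := hun _ hN _ hM
      have h1 : ¬ {a | y a ∈ V} ⊆ N ∪ M := fun h => hypos V hV hVne (hsub _ hNM _ h)
      obtain ⟨b, hbV, hb⟩ := Set.not_subset.1 h1
      obtain ⟨j, h1, h2⟩ := hy _ hNM b hb
      obtain ⟨⟨_, a, rfl⟩, haW, haD⟩ := hD.inter_open_nonempty
        (Subtype.val ⁻¹' (V ∩ {z : J → L | z j ≠ p}))
        ((hV.inter (hcoord j)).preimage continuous_subtype_val)
        ⟨⟨y b, b, rfl⟩, hbV, by change y b j ≠ p; rw [h2]; exact hpq.symm⟩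
      have haV : y a ∈ V := haW.1
      have haNM : a ∉ N ∪ M := fun h => haW.2 (h1 a h)
      have hxa : x a ∈ U := hVU ((hVM a fun h => haNM (Or.inr h)).1 haV)
      rcases hUN hxa with h | h
      · exact h haD
      · exact haNM (Or.inl h)
end

section
/- Let κ and λ be cardinals with 𝔠 ≤ κ = κ^ω < λ and 2^κ = 2^λ, and set μ := 2^κ. Then there exists a dense subspace X of the Tychonoff cube [0,1]^μ such that |X| = Δ(X) = λ, X is pseudocompact, connected and locally connected, and X is not κ⁺-resolvable (so X is κ⁺-irresolvable). -/
open Cardinal unitInterval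

/-- A space is pseudocompact if every continuous real-valued function on it is
bounded. -/
def IsPseudocompact (X : Type*) [TopologicalSpace X] : Prop :=
  ∀ f : X → ℝ, Continuous f → ∃ M : ℝ, ∀ x, |f x| ≤ M

/-- A space is `κ`-resolvable if it has `κ` many pairwise disjoint dense
subsets. -/
def IsKResolvable (X : Type u) [TopologicalSpace X] (κ : Cardinal.{u}) : Prop :=
  ∃ D : κ.out → Set X, (∀ i, Dense (D i)) ∧ Pairwise (Function.onFun Disjoint D)

open Set Filter Topology MeasureTheory in
theorem aux_vol_pos (U : Set I) (hU : IsOpen U) (hne : U.Nonempty) : 0 < (volume : Measure I) U := by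
  rw [unitInterval.volume_apply]
  obtain ⟨V, hV, rfl⟩ := isOpen_induced_iff.1 hU
  obtain ⟨x, hx⟩ := hne
  have h1 : (x : ℝ) ∈ closure (Ioo (0:ℝ) 1) := by
    rw [closure_Ioo (by norm_num)]; exact x.2
  have h2 : (V ∩ Ioo (0:ℝ) 1).Nonempty := mem_closure_iff.1 h1 V hV hx
  have h3 := (hV.inter (isOpen_Ioo (a := (0:ℝ)) (b := 1))).measure_pos volume h2
  refine lt_of_lt_of_le h3 (measure_mono ?_)
  rintro y ⟨hy, hy'⟩
  exact ⟨⟨y, hy'.1.le, hy'.2.le⟩, hy, rfl⟩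

open Set Filter Topology in
theorem aux_small_nbhd (a : I) (V : Set I) (hV : IsOpen V) (ha : a ∈ V) :
    ∃ J : Set I, IsOpen J ∧ a ∈ J ∧ J ⊆ V ∧ IsPreconnected J := by
  obtain ⟨ε, hε, hb⟩ := Metric.isOpen_iff.1 hV a ha
  refine ⟨Metric.ball a ε, Metric.isOpen_ball, Metric.mem_ball_self hε, hb, ?_⟩
  rw [← IsInducing.isPreconnected_image (f := ((↑) : I → ℝ)) IsInducing.subtypeVal]
  have : ((↑) : I → ℝ) '' (Metric.ball a ε) = Metric.ball (a : ℝ) ε ∩ Icc 0 1 := by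
    ext y
    constructor
    · rintro ⟨z, hz, rfl⟩
      exact ⟨hz, z.2⟩
    · rintro ⟨h1, h2⟩
      exact ⟨⟨y, h2⟩, h1, rfl⟩
  rw [this]
  exact ((convex_ball _ _).inter (convex_Icc _ _)).isPreconnected

/-- `X` is onto every countable face of the cube. -/
def FullCount {M : Type u} (X : Set (M → I)) : Prop :=
  ∀ A : Set M, A.Countable → ∀ p : M → I, ∃ x ∈ X, ∀ m ∈ A, x m = p m

/-- `V` depends only on the coordinates in `A`. -/
def DepOn {M : Type u} (A : Set M) (V : Set (M → I)) : Prop :=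
  ∀ x y : M → I, (∀ m ∈ A, x m = y m) → x ∈ V → y ∈ V

open Set Filter Topology in
open scoped Classical in
theorem aux_phi_cont {M : Type u} (A : Set M) (y : M → I) :
    Continuous (fun z : M → I => fun m => if m ∈ A then z m else y m) := by
  refine continuous_pi fun m => ?_
  by_cases h : m ∈ A
  · simpa [h] using continuous_apply m
  · simpa [h] using continuous_const

open Set Filter Topology in
open scoped Classical in
theorem DepOn.closure {M : Type u} {A : Set M} {V : Set (M → I)} (h : DepOn A V) :
    DepOn A (closure V) := by
  intro x y hxy hx
  have hm : MapsTo (fun z : M → I => fun m => if m ∈ A then z m else y m) V V := by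
    intro z hz
    exact h z _ (fun m hm => by simp [hm]) hz
  have := map_mem_closure (aux_phi_cont A y) hx hm
  convert this using 1
  ext m
  by_cases hmA : m ∈ A
  · simp [hmA, hxy m hmA]
  · simp [hmA]

theorem DepOn.mono {M : Type u} {A B : Set M} {V : Set (M → I)} (h : DepOn A V) (hAB : A ⊆ B) :
    DepOn B V := fun x y hxy hx => h x y (fun m hm => hxy m (hAB hm)) hx

open Set Filter Topology in
/-- basic open boxes -/
def IsBox {M : Type u} (B : Set (M → I)) : Prop :=
  ∃ (t : Finset M) (J : M → Set I), (∀ m, IsOpen (J m)) ∧ B = Set.pi (t : Set M) J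

open Set Filter Topology in
theorem IsBox.isOpen {M : Type u} {B : Set (M → I)} (h : IsBox B) : IsOpen B := by
  obtain ⟨t, J, hJ, rfl⟩ := h
  exact isOpen_set_pi t.finite_toSet fun m _ => hJ m

theorem IsBox.dep {M : Type u} {B : Set (M → I)} (h : IsBox B) :
    ∃ t : Finset M, DepOn (t : Set M) B := by
  obtain ⟨t, J, hJ, rfl⟩ := h
  exact ⟨t, fun x y hxy hx m hm => hxy m hm ▸ hx m hm⟩

open Set Filter Topology in
theorem exists_box {M : Type u} {V : Set (M → I)} (hV : IsOpen V) {x : M → I} (hx : x ∈ V) :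
    ∃ B, IsBox B ∧ x ∈ B ∧ B ⊆ V := by
  classical
  obtain ⟨t, J, hJ, hsub⟩ := isOpen_pi_iff.1 hV x hx
  refine ⟨Set.pi t fun m => if m ∈ t then J m else Set.univ, ⟨t, _, ?_, rfl⟩, ?_, ?_⟩
  · intro m
    by_cases h : m ∈ t
    · simpa [h] using (hJ m h).1
    · simp [h]
  · intro m hm
    have hm' : m ∈ t := hm
    simpa [hm'] using (hJ m hm).2
  · refine Subset.trans ?_ hsub
    intro y hy m hm
    have hm' : m ∈ t := hm
    simpa [hm'] using hy m hm

open Set Filter Topology MeasureTheory in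
theorem box_countable {M : Type u} (c : Set (Set (M → I))) (hc : ∀ B ∈ c, IsBox B ∧ B.Nonempty)
    (hd : c.PairwiseDisjoint id) : c.Countable := by
  classical
  let P : Measure (M → I) := Measure.infinitePi (fun _ => (volume : Measure I))
  have hmeas : ∀ B : c, MeasurableSet (B : Set (M → I)) := by
    rintro ⟨B, hB⟩
    obtain ⟨t, J, hJ, rfl⟩ := (hc B hB).1
    exact MeasurableSet.pi t.countable_toSet fun m _ => (hJ m).measurableSet
  have hpos : ∀ B : c, 0 < P (B : Set (M → I)) := by
    rintro ⟨B, hB⟩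
    obtain ⟨⟨t, J, hJ, rfl⟩, ⟨x, hx⟩⟩ := hc B hB
    change 0 < Measure.infinitePi (fun _ => (volume : Measure I)) (Set.pi t J)
    rw [Measure.infinitePi_pi _ (fun m _ => (hJ m).measurableSet)]
    rw [pos_iff_ne_zero, Finset.prod_ne_zero_iff]
    intro m hm
    exact (aux_vol_pos _ (hJ m) ⟨x m, hx m hm⟩).ne'
  have hdis : Pairwise (Function.onFun Disjoint (fun B : c => (B : Set (M → I)))) := by
    intro B B' hne
    exact hd B.2 B'.2 (fun h => hne (Subtype.ext h))
  have := Measure.countable_meas_pos_of_disjoint_iUnion (μ := P) hmeas hdis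
  have h2 : {B : c | 0 < P (B : Set (M → I))} = Set.univ := eq_univ_of_forall hpos
  rw [h2] at this
  exact countable_coe_iff.1 (countable_univ_iff.1 this)

open Set Filter Topology in
theorem exists_countable_dense_dep {M : Type u} {V : Set (M → I)} (hV : IsOpen V) :
    ∃ (A : Set M) (V' : Set (M → I)), A.Countable ∧ V' ⊆ V ∧ V ⊆ closure V' ∧ DepOn A V' := by
  classical
  let Fam : Set (Set (Set (M → I))) :=
    {c | (∀ B ∈ c, (IsBox B ∧ B.Nonempty) ∧ B ⊆ V) ∧ c.PairwiseDisjoint id}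
  obtain ⟨c, -, hc⟩ := zorn_subset_nonempty Fam (by
    intro ch hch hchain _
    refine ⟨⋃₀ ch, ⟨?_, ?_⟩, fun s hs => subset_sUnion_of_mem hs⟩
    · rintro B ⟨d, hd, hB⟩
      exact (hch hd).1 B hB
    · rw [pairwiseDisjoint_sUnion hchain.directedOn]
      exact fun d hd => (hch hd).2) ∅ ⟨by simp, by simp⟩
  have hcc : c.Countable := box_countable c (fun B hB => (hc.prop.1 B hB).1) hc.prop.2
  have hdep : ∀ B : Set (M → I), ∃ t : Finset M, B ∈ c → DepOn (t : Set M) B := by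
    intro B
    by_cases hB : B ∈ c
    · obtain ⟨t, ht⟩ := (hc.prop.1 B hB).1.1.dep
      exact ⟨t, fun _ => ht⟩
    · exact ⟨∅, fun h => absurd h hB⟩
  choose t ht using hdep
  refine ⟨⋃ B ∈ c, (t B : Set M), ⋃₀ c, hcc.biUnion fun B _ => (t B).countable_toSet, ?_, ?_, ?_⟩
  · exact sUnion_subset fun B hB => (hc.prop.1 B hB).2
  · intro x hx
    by_contra hxc
    obtain ⟨B, hB, hxB, hBs⟩ := exists_box (hV.inter isClosed_closure.isOpen_compl) (x := x) ⟨hx, hxc⟩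
    have hBd : ∀ D ∈ c, Disjoint B D := by
      intro D hD
      refine Set.disjoint_left.2 fun y hy hyD => ?_
      exact (hBs hy).2 (subset_closure ⟨D, hD, hyD⟩)
    have hins : insert B c ∈ Fam := by
      refine ⟨?_, ?_⟩
      · rintro D (rfl | hD)
        · exact ⟨⟨hB, x, hxB⟩, fun y hy => (hBs hy).1⟩
        · exact hc.prop.1 D hD
      · exact hc.prop.2.insert fun D hD _ => hBd D hD
    have hBc : B ∈ c := hc.le_of_ge hins (subset_insert _ _) (mem_insert _ _)
    exact Set.disjoint_left.1 (hBd B hBc) hxB hxB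
  · rintro x y hxy ⟨B, hB, hxB⟩
    exact ⟨B, hB, ht B hB x y (fun m hm => hxy m (mem_biUnion hB hm)) hxB⟩

open Set Filter Topology in
theorem FullCount.dense {M : Type u} {X : Set (M → I)} (h : FullCount X) : Dense X := by
  rw [dense_iff_inter_open]
  rintro V hV ⟨p, hp⟩
  obtain ⟨B, hB, hpB, hBV⟩ := exists_box hV hp
  obtain ⟨t, ht⟩ := hB.dep
  obtain ⟨x, hx, hxp⟩ := h t t.countable_toSet p
  exact ⟨x, hBV (ht p x (fun m hm => (hxp m hm).symm) hpB), hx⟩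

open Set Filter Topology in
theorem FullCount.preconn {M : Type u} {X : Set (M → I)} (h : FullCount X) (t : Finset M)
    (J : M → Set I) (hJ : ∀ m ∈ t, IsOpen (J m)) (hJc : ∀ m ∈ t, IsPreconnected (J m)) :
    IsPreconnected (X ∩ Set.pi (t : Set M) J) := by
  classical
  set U := Set.pi (t : Set M) J with hUdef
  have hU : IsOpen U := isOpen_set_pi t.finite_toSet fun m hm => hJ m hm
  have hUc : IsPreconnected U := by
    have : U = Set.pi Set.univ fun m => if m ∈ t then J m else Set.univ := by
      ext x
      simp only [hUdef, Set.mem_pi, Finset.mem_coe, mem_univ, true_imp_iff]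
      refine forall_congr' fun m => ?_
      by_cases hm : m ∈ t <;> simp [hm]
    rw [this]
    refine isPreconnected_univ_pi fun m => ?_
    by_cases hm : m ∈ t
    · simpa [hm] using hJc m hm
    · simpa [hm] using isPreconnected_univ
  have hUdep : DepOn (t : Set M) U := fun x y hxy hx m hm => hxy m hm ▸ hx m hm
  intro O1 O2 hO1 hO2 hcov h1 h2
  by_contra hcon
  have hdisj : ¬ ((O1 ∩ U) ∩ (O2 ∩ U)).Nonempty := by
    intro hne
    obtain ⟨x, hx, hxX⟩ := h.dense.inter_open_nonempty _ ((hO1.inter hU).inter (hO2.inter hU)) hne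
    exact hcon ⟨x, ⟨hxX, hx.1.2⟩, hx.1.1, hx.2.1⟩
  obtain ⟨A1, V, hA1, hV1, hV2, hVd⟩ := exists_countable_dense_dep (hO1.inter hU)
  obtain ⟨A2, W, hA2, hW1, hW2, hWd⟩ := exists_countable_dense_dep (hO2.inter hU)
  have hcl : U ⊆ closure V ∪ closure W := by
    intro x hx
    have hx' : x ∈ closure (U ∩ X) := h.dense.open_subset_closure_inter hU hx
    rw [← closure_union]
    refine closure_minimal ?_ isClosed_closure hx'
    rintro y ⟨hyU, hyX⟩
    rw [closure_union]
    rcases hcov ⟨hyX, hyU⟩ with hy | hy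
    · exact Or.inl (hV2 ⟨hy, hyU⟩)
    · exact Or.inr (hW2 ⟨hy, hyU⟩)
  obtain ⟨p, hpU, hpV, hpW⟩ := isPreconnected_closed_iff.1 hUc _ _ isClosed_closure isClosed_closure
    hcl (by
      obtain ⟨y, ⟨hyX, hyU⟩, hy⟩ := h1
      exact ⟨y, hyU, hV2 ⟨hy, hyU⟩⟩) (by
      obtain ⟨y, ⟨hyX, hyU⟩, hy⟩ := h2
      exact ⟨y, hyU, hW2 ⟨hy, hyU⟩⟩)
  obtain ⟨x, hxX, hxp⟩ := h (A1 ∪ A2 ∪ t) ((hA1.union hA2).union t.countable_toSet) p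
  have hxU : x ∈ U := hUdep p x (fun m hm => (hxp m (Or.inr hm)).symm) hpU
  have hxV : x ∈ closure V :=
    hVd.closure p x (fun m hm => (hxp m (Or.inl (Or.inl hm))).symm) hpV
  have hxW : x ∈ closure W :=
    hWd.closure p x (fun m hm => (hxp m (Or.inl (Or.inr hm))).symm) hpW
  rcases hcov ⟨hxX, hxU⟩ with hx | hx
  · obtain ⟨y, hy, hyW⟩ := mem_closure_iff.1 hxW _ (hO1.inter hU) ⟨hx, hxU⟩
    exact hdisj ⟨y, hy, hW1 hyW⟩
  · obtain ⟨y, hy, hyV⟩ := mem_closure_iff.1 hxV _ (hO2.inter hU) ⟨hx, hxU⟩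
    exact hdisj ⟨y, hV1 hyV, hy⟩

open Set Filter Topology in
theorem FullCount.connected {M : Type u} {X : Set (M → I)} (h : FullCount X) :
    ConnectedSpace X := by
  rw [← isConnected_iff_connectedSpace]
  refine ⟨?_, ?_⟩
  · obtain ⟨x, hx, -⟩ := h ∅ countable_empty (fun _ => 0)
    exact ⟨x, hx⟩
  · simpa using h.preconn ∅ (fun _ => univ) (by simp) (by simp)

open Set Filter Topology in
theorem FullCount.locConnected {M : Type u} {X : Set (M → I)} (h : FullCount X) :
    LocallyConnectedSpace X := by
  classical
  rw [locallyConnectedSpace_iff_subsets_isOpen_isConnected]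
  intro x U hU
  obtain ⟨O, hO, hOU⟩ := (mem_nhds_subtype X x U).1 hU
  obtain ⟨O', hO'O, hO', hxO'⟩ := mem_nhds_iff.1 hO
  obtain ⟨t, J, hJ, hsub⟩ := isOpen_pi_iff.1 hO' x hxO'
  have : ∀ m, ∃ K : Set I, m ∈ t → (IsOpen K ∧ x.1 m ∈ K ∧ K ⊆ J m ∧ IsPreconnected K) := by
    intro m
    by_cases hm : m ∈ t
    · obtain ⟨K, hK⟩ := aux_small_nbhd (x.1 m) (J m) (hJ m hm).1 (hJ m hm).2
      exact ⟨K, fun _ => hK⟩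
    · exact ⟨∅, fun h => absurd h hm⟩
  choose K hK using this
  refine ⟨Subtype.val ⁻¹' (Set.pi (t : Set M) K), ?_, ?_, ?_, ?_⟩
  · intro y hy
    exact hOU (hO'O (hsub fun m hm => (hK m hm).2.2.1 (hy m hm)))
  · exact (isOpen_set_pi t.finite_toSet fun m hm => (hK m hm).1).preimage continuous_subtype_val
  · exact fun m hm => (hK m hm).2.1
  · refine ⟨⟨x, fun m hm => (hK m hm).2.1⟩, ?_⟩
    rw [← IsInducing.isPreconnected_image (f := ((↑) : X → (M → I))) IsInducing.subtypeVal,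
      Subtype.image_preimage_coe]
    exact h.preconn t K (fun m hm => (hK m hm).1) (fun m hm => (hK m hm).2.2.2)

open Set Filter Topology in
theorem FullCount.pseudocompact {M : Type u} {X : Set (M → I)} (h : FullCount X) :
    IsPseudocompact X := by
  classical
  intro f hf
  by_contra hcon
  push Not at hcon
  have hb : ∀ n : ℕ, ∃ (x : M → I) (B : Set (M → I)) (t : Finset M), IsOpen B ∧ x ∈ B ∧
      DepOn (t : Set M) B ∧ ∀ y : X, y.1 ∈ B → (n : ℝ) < |f y| := by
    intro n
    obtain ⟨x, hx⟩ := hcon n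
    have ho : IsOpen {y : X | (n : ℝ) < |f y|} := isOpen_lt continuous_const hf.abs
    obtain ⟨O, hO, hOe⟩ := isOpen_induced_iff.1 ho
    have hxO : x.1 ∈ O := by
      have : x ∈ (Subtype.val ⁻¹' O : Set X) := by rw [hOe]; exact hx
      exact this
    obtain ⟨B, hB, hxB, hBO⟩ := exists_box hO hxO
    obtain ⟨t, ht⟩ := hB.dep
    refine ⟨x.1, B, t, hB.isOpen, hxB, ht, fun y hy => ?_⟩
    have : y ∈ (Subtype.val ⁻¹' O : Set X) := hBO hy
    rw [hOe] at this
    exact this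
  choose x B t hBo hxB hBd hBf using hb
  obtain ⟨p, -, hp⟩ := isCompact_univ.exists_mapClusterPt (f := atTop) (u := x) (by simp)
  obtain ⟨q, hqX, hqp⟩ := h (⋃ n, (t n : Set M)) (countable_iUnion fun n => (t n).countable_toSet) p
  obtain ⟨N, hN⟩ := exists_nat_gt |f ⟨q, hqX⟩|
  have ho : IsOpen {y : X | |f y| < N} := isOpen_lt hf.abs continuous_const
  obtain ⟨G, hG, hGe⟩ := isOpen_induced_iff.1 ho
  have hqG : q ∈ G := by
    have : (⟨q, hqX⟩ : X) ∈ (Subtype.val ⁻¹' G : Set X) := by rw [hGe]; exact hN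
    exact this
  set A := ⋃ n, (t n : Set M) with hA
  let φ : (M → I) → (M → I) := fun z m => if m ∈ A then z m else q m
  have hφ : Continuous φ := aux_phi_cont A q
  have hφp : φ p = q := by
    ext m
    by_cases hm : m ∈ A
    · simp [φ, hm, hqp m hm]
    · simp [φ, hm]
  have hnh : φ ⁻¹' G ∈ 𝓝 p := hφ.continuousAt.preimage_mem_nhds (by rw [hφp]; exact hG.mem_nhds hqG)
  have hfr := mapClusterPt_iff_frequently.1 hp _ hnh
  obtain ⟨n, hn, hnG⟩ := (frequently_atTop.1 hfr) N
  have hne : (G ∩ B n).Nonempty := by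
    refine ⟨φ (x n), hnG, hBd n (x n) _ (fun m hm => ?_) (hxB n)⟩
    have : m ∈ A := mem_iUnion.2 ⟨n, hm⟩
    simp [φ, this]
  obtain ⟨y, ⟨hyG, hyB⟩, hyX⟩ := h.dense.inter_open_nonempty _ (hG.inter (hBo n)) hne
  have h1 := hBf n ⟨y, hyX⟩ hyB
  have h2 : (⟨y, hyX⟩ : X) ∈ (Subtype.val ⁻¹' G : Set X) := hyG
  rw [hGe] at h2
  have h3 : |f ⟨y, hyX⟩| < N := h2
  have : (N : ℝ) ≤ n := by exact_mod_cast hn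
  linarith

open Set in
theorem exists_full (κ : Cardinal.{u}) (h1 : Cardinal.continuum ≤ κ)
    (h2 : κ ^ (ℵ₀ : Cardinal.{u}) = κ) :
    ∃ Y : Set (((2 : Cardinal.{u}) ^ κ).out → I), #Y ≤ κ ∧ FullCount Y := by
  classical
  have hinf : ℵ₀ ≤ κ := Cardinal.aleph0_le_continuum.trans h1
  have : Nonempty κ.out := by
    rw [← Cardinal.mk_ne_zero_iff, Cardinal.mk_out]
    exact (Cardinal.aleph0_pos.trans_le hinf).ne'
  have hM : #(((2 : Cardinal.{u}) ^ κ).out) = #(Set κ.out) := by simp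
  obtain ⟨e⟩ := Cardinal.eq.1 hM
  have : Nonempty ((2 : Cardinal.{u}) ^ κ).out := ⟨e.symm ∅⟩
  let y : (ℕ → κ.out) × (ℕ → Set ℕ) × (ℕ → I) → (((2 : Cardinal.{u}) ^ κ).out → I) :=
    fun c m => if h : ∃ n, c.2.1 n = c.1 ⁻¹' (e m) then c.2.2 h.choose else 0
  refine ⟨range y, ?_, ?_⟩
  · refine Cardinal.mk_range_le.trans ?_
    have hI : #I = Cardinal.continuum := by
      exact Cardinal.mk_Icc_real (by norm_num)
    simp only [Cardinal.mk_prod, Cardinal.mk_arrow, Cardinal.mk_set, Cardinal.mk_out,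
      Cardinal.mk_nat, Cardinal.lift_aleph0, Cardinal.lift_uzero, h2, hI,
      Cardinal.two_power_aleph0, Cardinal.continuum_power_aleph0, Cardinal.lift_continuum,
      Cardinal.continuum_mul_self]
    refine (Cardinal.mul_le_max_of_aleph0_le_left hinf).trans ?_
    simp [h1]
  · intro A hA p
    obtain ⟨a, ha⟩ := Set.countable_iff_exists_subset_range.1 hA
    have hk : ∀ i j : ℕ, ∃ k : κ.out, a i ≠ a j → ¬ (k ∈ e (a i) ↔ k ∈ e (a j)) := by
      intro i j
      by_cases hij : a i = a j
      · exact ⟨Classical.arbitrary _, fun h => absurd hij h⟩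
      · have : e (a i) ≠ e (a j) := fun h => hij (e.injective h)
        by_contra hcon
        push Not at hcon
        exact this (Set.ext fun k => (hcon k).2)
    choose k hk using hk
    let C : ℕ → κ.out := fun n => k n.unpair.1 n.unpair.2
    have hC : ∀ i j, C ⁻¹' (e (a i)) = C ⁻¹' (e (a j)) → a i = a j := by
      intro i j hij
      by_contra hne
      apply hk i j hne
      have : Nat.pair i j ∈ C ⁻¹' (e (a i)) ↔ Nat.pair i j ∈ C ⁻¹' (e (a j)) := by rw [hij]
      simpa [C] using this
    refine ⟨y ⟨C, fun i => C ⁻¹' (e (a i)), fun i => p (a i)⟩, ⟨_, rfl⟩, ?_⟩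
    intro m hm
    obtain ⟨i, rfl⟩ := ha hm
    have hex : ∃ n, C ⁻¹' (e (a n)) = C ⁻¹' (e (a i)) := ⟨i, rfl⟩
    have : y ⟨C, fun i => C ⁻¹' (e (a i)), fun i => p (a i)⟩ (a i) = p (a hex.choose) := by
      simp only [y]
      rw [dif_pos hex]
    rw [this, hC _ _ hex.choose_spec]

open Set in
theorem exists_sep {T : Type u} [Nonempty T] (t : Finset (Set T)) :
    ∃ F : Finset T, ∀ P ∈ t, ∀ Q ∈ t, (∀ x ∈ F, x ∈ P ↔ x ∈ Q) → P = Q := by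
  classical
  have hd : ∀ P Q : Set T, ∃ x : T, (x ∈ P ↔ x ∈ Q) → P = Q := by
    intro P Q
    by_cases h : P = Q
    · exact ⟨Classical.arbitrary _, fun _ => h⟩
    · by_contra hcon
      push Not at hcon
      exact h (Set.ext fun x => (hcon x).1)
  choose d hd using hd
  refine ⟨(t ×ˢ t).image fun q => d q.1 q.2, fun P hP Q hQ h => hd P Q (h _ ?_)⟩
  exact Finset.mem_image.2 ⟨(P, Q), Finset.mem_product.2 ⟨hP, hQ⟩, rfl⟩

open Set in
theorem exists_indep (lam : Cardinal.{u}) (hl : ℵ₀ ≤ lam) :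
    ∃ S : Type u, #S = lam ∧ ∃ g : Set lam.out → S → I, ∀ t : Finset (Set lam.out),
      ∀ J : Set lam.out → Set I, (∀ P ∈ t, IsOpen (J P) ∧ (J P).Nonempty) →
        lam ≤ #{s | ∀ P ∈ t, g P s ∈ J P} := by
  classical
  have : Infinite lam.out := by rw [Cardinal.infinite_iff, Cardinal.mk_out]; exact hl
  let S := lam.out × Finset lam.out × (Finset lam.out →₀ ℕ)
  refine ⟨S, ?_, fun P s => TopologicalSpace.denseSeq I (s.2.2 (s.2.1.filter (· ∈ P))), ?_⟩
  · simp [S, Cardinal.mk_prod, Cardinal.mul_eq_self hl, hl]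
  · intro t J hJ
    obtain ⟨F, hF⟩ := exists_sep t
    have hn : ∀ P : Set lam.out, ∃ n : ℕ, P ∈ t → TopologicalSpace.denseSeq I n ∈ J P := by
      intro P
      by_cases hP : P ∈ t
      · obtain ⟨_, hx, n, rfl⟩ := (TopologicalSpace.denseRange_denseSeq I).inter_open_nonempty _
          (hJ P hP).1 (hJ P hP).2
        exact ⟨n, fun _ => hx⟩
      · exact ⟨0, fun h => absurd h hP⟩
    choose n hn using hn
    let φ : Finset lam.out →₀ ℕ := Finsupp.onFinset F.powerset
      (fun G => if h : ∃ P ∈ t, F.filter (· ∈ P) = G then n h.choose else 0) (by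
        intro G hG
        by_cases h : ∃ P ∈ t, F.filter (· ∈ P) = G
        · obtain ⟨P, -, rfl⟩ := h
          exact Finset.mem_powerset.2 (Finset.filter_subset _ _)
        · exact absurd (dif_neg h) hG)
    have hφ : ∀ P ∈ t, φ (F.filter (· ∈ P)) = n P := by
      intro P hP
      have hex : ∃ Q ∈ t, F.filter (· ∈ Q) = F.filter (· ∈ P) := ⟨P, hP, rfl⟩
      have h1 : φ (F.filter (· ∈ P)) = n hex.choose := by
        simp only [φ, Finsupp.onFinset_apply]
        rw [dif_pos hex]
      have h2 : hex.choose = P := by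
        refine hF _ hex.choose_spec.1 _ hP fun x hx => ?_
        have := congrArg (x ∈ ·) hex.choose_spec.2
        simpa [hx] using this
      rw [h1, h2]
    have hinj : Function.Injective (fun x : lam.out => (⟨(x, F, φ), by
        intro P hP
        change TopologicalSpace.denseSeq I (φ (F.filter (· ∈ P))) ∈ J P
        rw [hφ P hP]
        exact hn P hP⟩ : {s : S | ∀ P ∈ t,
          TopologicalSpace.denseSeq I (s.2.2 (s.2.1.filter (· ∈ P))) ∈ J P})) := by
      intro x x' hxx
      exact congrArg (fun s => s.1.1) hxx
    have h := Cardinal.mk_le_of_injective hinj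
    rwa [Cardinal.mk_out] at h

/-- `lam`-independence of a family of functions. -/
def Ind {S : Type u} (lam : Cardinal.{u}) (F : Set (S → I)) : Prop :=
  ∀ t : Finset (S → I), (t : Set (S → I)) ⊆ F → ∀ J : (S → I) → Set I,
    (∀ f ∈ t, IsOpen (J f) ∧ (J f).Nonempty) → lam ≤ #{s | ∀ f ∈ t, f s ∈ J f}

open Set in
theorem small_fin_union {S ι : Type u} (lam : Cardinal.{u}) (hl : ℵ₀ ≤ lam) (t : Finset ι)
    (A : ι → Set S) (hA : ∀ i, #(A i) < lam) : #(⋃ i ∈ t, A i : Set S) < lam := by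
  classical
  induction t using Finset.induction_on with
  | empty => simpa using Cardinal.aleph0_pos.trans_le hl
  | insert a s ha ih =>
    rw [Finset.set_biUnion_insert]
    exact (Cardinal.mk_union_le _ _).trans_lt (Cardinal.add_lt_of_lt hl (hA a) ih)

open Set in
theorem big_diff {S : Type u} (lam : Cardinal.{u}) (hl : ℵ₀ ≤ lam) (B N : Set S)
    (hB : lam ≤ #B) (hN : #N < lam) : lam ≤ #(B \ N : Set S) := by
  by_contra hcon
  push Not at hcon
  have : #B ≤ #((B \ N) ∪ N : Set S) := Cardinal.mk_le_mk_of_subset (by simp)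
  exact absurd (hB.trans (this.trans (Cardinal.mk_union_le _ _)))
    (not_le.2 (Cardinal.add_lt_of_lt hl hcon hN))

open Set in
theorem exists_max (lam : Cardinal.{u}) (hl : ℵ₀ ≤ lam) :
    ∃ S : Type u, #S = lam ∧ ∃ F : Set (S → I), Ind lam F ∧
      (∀ A : Set S, #A < lam → ∃ f ∈ F, ∀ s, f s = 0 ↔ s ∈ A) ∧ #F = 2 ^ lam ∧
      ∀ g, Ind lam (insert g F) → g ∈ F := by
  classical
  obtain ⟨S, hS, g, hg⟩ := exists_indep lam hl
  have hST : #lam.out = #S := by simp [hS]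
  obtain ⟨e⟩ := Cardinal.eq.1 hST
  let A : Set lam.out → Set S := fun P => if #P < lam then e '' P else ∅
  have hA : ∀ P, #(A P) < lam := by
    intro P
    by_cases h : #P < lam
    · simpa [A, h] using Cardinal.mk_image_le.trans_lt h
    · simpa [A, h] using Cardinal.aleph0_pos.trans_le hl
  let f : Set lam.out → S → I := fun P s => if s ∈ A P then 0 else if g P s = 0 then 1 else g P s
  have hf : ∀ t : Finset (Set lam.out), ∀ J : Set lam.out → Set I,
      (∀ P ∈ t, IsOpen (J P) ∧ (J P).Nonempty) → lam ≤ #{s | ∀ P ∈ t, f P s ∈ J P} := by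
    intro t J hJ
    have h1 := hg t (fun P => J P \ {0}) (fun P hP => ⟨(hJ P hP).1.sdiff isClosed_singleton, by
      have := (dense_compl_singleton (0 : I)).inter_open_nonempty _ (hJ P hP).1 (hJ P hP).2
      exact this⟩)
    have h2 := big_diff lam hl _ _ h1 (small_fin_union lam hl t A hA)
    refine h2.trans (Cardinal.mk_le_mk_of_subset ?_)
    rintro s ⟨hs1, hs2⟩ P hP
    have hsA : s ∉ A P := fun h => hs2 (mem_biUnion hP h)
    have h3 := hs1 P hP
    have h4 : g P s ≠ 0 := h3.2
    simpa [f, hsA, h4] using h3.1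
  have hfinj : Function.Injective f := by
    intro P Q hPQ
    by_contra hne
    let h : I := ⟨1/2, by norm_num, by norm_num⟩
    have h0 : (0 : I) < h := by
      rw [← Subtype.coe_lt_coe]; norm_num [h]
    have h1 : h < (1 : I) := by
      rw [← Subtype.coe_lt_coe]; norm_num [h]
    have := hf {P, Q} (fun R => if R = P then Iio h else Ioi h) (by
      intro R _
      by_cases hR : R = P
      · simp only [hR, if_true]; exact ⟨isOpen_Iio, 0, h0⟩
      · simp only [hR, if_false]; exact ⟨isOpen_Ioi, 1, h1⟩)
    have hpos : #{s | ∀ R ∈ ({P, Q} : Finset _), f R s ∈ (if R = P then Iio h else Ioi h)} ≠ 0 :=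
      ((Cardinal.aleph0_pos.trans_le hl).trans_le this).ne'
    obtain ⟨s, hs⟩ := Cardinal.mk_ne_zero_iff.1 hpos
    have hs1 := hs P (by simp)
    have hs2 := hs Q (by simp)
    rw [if_pos rfl] at hs1
    rw [if_neg (fun h => hne h.symm), ← hPQ] at hs2
    exact lt_asymm (show f P s < h from hs1) hs2
  have hF0 : Ind lam (range f) := by
    intro t ht J hJ
    have h1 := hf (t.preimage f hfinj.injOn) (fun P => J (f P)) (fun P hP => hJ _ (by simpa using hP))
    refine h1.trans (Cardinal.mk_le_mk_of_subset ?_)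
    intro s hs h hh
    obtain ⟨P, rfl⟩ := ht hh
    exact hs P (by simpa using hh)
  have hfc : Order.IsOfFiniteCharacter {F : Set (S → I) | Ind lam F} := by
    intro F
    constructor
    · intro hF y hy _ t ht
      exact hF t (ht.trans hy)
    · intro hF t ht
      exact hF t ht t.finite_toSet t subset_rfl
  obtain ⟨F, hF0F, hF⟩ := hfc.exists_maximal (x := range f) hF0
  refine ⟨S, hS, F, hF.prop, ?_, ?_, ?_⟩
  · intro B hB
    have hc : #(e ⁻¹' B) < lam := by
      rw [Cardinal.mk_preimage_equiv]; exact hB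
    refine ⟨f (e ⁻¹' B), hF0F ⟨_, rfl⟩, fun s => ?_⟩
    have : A (e ⁻¹' B) = B := by
      simp only [A, hc, if_true]
      exact e.image_preimage B
    simp only [f, this]
    by_cases hs : s ∈ B
    · simp [hs]
    · by_cases h0 : g (e ⁻¹' B) s = 0 <;> simp [hs, h0]
  · apply le_antisymm
    · refine (Cardinal.mk_set_le F).trans ?_
      have hI : #I = Cardinal.continuum := Cardinal.mk_Icc_real (by norm_num)
      simp only [Cardinal.mk_arrow, hI, hS, Cardinal.lift_continuum, Cardinal.lift_uzero]
      rw [← Cardinal.two_power_aleph0, ← Cardinal.power_mul, Cardinal.aleph0_mul_eq hl]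
    · have h1 : #(range f) = 2 ^ lam := by
        rw [Cardinal.mk_range_eq f hfinj]; simp
      rw [← h1]
      exact Cardinal.mk_le_mk_of_subset hF0F
  · intro h hh
    exact hF.le_of_ge hh (subset_insert _ _) (mem_insert _ _)

/-- if `𝔠 ≤ κ = κ^ω < λ` and `2^κ = 2^λ = μ`, then the Tychonoff
cube `[0,1]^μ` has a dense subspace `X` with `|X| = Δ(X) = λ` which is
pseudocompact, connected, locally connected and not `κ⁺`-resolvable. -/
theorem stmt6 (κ lam : Cardinal.{u}) (h1 : Cardinal.continuum ≤ κ)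
    (h2 : κ ^ (ℵ₀ : Cardinal.{u}) = κ) (h3 : κ < lam)
    (h4 : (2 : Cardinal.{u}) ^ κ = 2 ^ lam) :
    ∃ X : Set (((2 : Cardinal.{u}) ^ κ).out → I),
      Dense X ∧ #X = lam ∧ dispersion X = lam ∧
      IsPseudocompact X ∧ ConnectedSpace X ∧ LocallyConnectedSpace X ∧
      ¬ IsKResolvable X (Order.succ κ) := by
  classical
  have hκ : ℵ₀ ≤ κ := Cardinal.aleph0_le_continuum.trans h1
  have hl : ℵ₀ ≤ lam := hκ.trans h3.le
  obtain ⟨Y, hYκ, hY⟩ := exists_full κ h1 h2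
  obtain ⟨S, hS, F, hF, hFz, hFc, hFm⟩ := exists_max lam hl
  have hMF : #(((2 : Cardinal.{u}) ^ κ).out) = #F := by rw [hFc, Cardinal.mk_out, h4]
  obtain ⟨e⟩ := Cardinal.eq.1 hMF
  let z : S → (((2 : Cardinal.{u}) ^ κ).out → I) := fun s m => (e m).1 s
  -- every nonempty open set contains many points
  have hbig : ∀ O : Set (((2 : Cardinal.{u}) ^ κ).out → I), IsOpen O → O.Nonempty →
      lam ≤ #{s | z s ∈ O} := by
    rintro O hO ⟨p, hp⟩
    obtain ⟨t, J, hJ, hsub⟩ := isOpen_pi_iff.1 hO p hp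
    have := hF (t.image fun m => (e m).1) (by
      intro f hf
      obtain ⟨m, -, rfl⟩ := Finset.mem_image.1 (Finset.mem_coe.1 hf)
      exact (e m).2) (fun f => if h : f ∈ F then J (e.symm ⟨f, h⟩) else ∅) (by
      intro f hf
      obtain ⟨m, hm, rfl⟩ := Finset.mem_image.1 hf
      simpa using ⟨(hJ m hm).1, ⟨p m, (hJ m hm).2⟩⟩)
    refine this.trans (Cardinal.mk_le_mk_of_subset ?_)
    intro s hs
    refine hsub fun m hm => ?_
    have := hs (e m).1 (Finset.mem_image_of_mem _ hm)
    simpa using this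
  have hzinj : Function.Injective z := by
    intro s s' hss
    obtain ⟨f, hf, hf0⟩ := hFz {s} (by simpa using Cardinal.one_lt_aleph0.trans_le hl)
    have h5 := congrFun hss (e.symm ⟨f, hf⟩)
    simp only [z, Equiv.apply_symm_apply] at h5
    have h6 : f s = 0 := (hf0 s).2 rfl
    rw [h6] at h5
    exact ((hf0 s').1 h5.symm).symm
  have hXfull : FullCount (Y ∪ Set.range z) := by
    intro A hA p
    obtain ⟨x, hx, hxp⟩ := hY A hA p
    exact ⟨x, Or.inl hx, hxp⟩
  have hcard : #(Y ∪ Set.range z : Set _) = lam := by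
    apply le_antisymm
    · refine (Cardinal.mk_union_le _ _).trans ?_
      rw [Cardinal.mk_range_eq z hzinj, hS]
      exact (Cardinal.add_le_max _ _).trans (max_le (max_le (hYκ.trans h3.le) le_rfl) hl)
    · rw [← hS, ← Cardinal.mk_range_eq z hzinj]
      exact Cardinal.mk_le_mk_of_subset Set.subset_union_right
  have hzX : ∀ s, z s ∈ Y ∪ Set.range z := fun s => Or.inr ⟨s, rfl⟩
  refine ⟨Y ∪ Set.range z, hXfull.dense, hcard, ?_, hXfull.pseudocompact, hXfull.connected,
    hXfull.locConnected, ?_⟩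
  · have hne : (Set.univ : Set (Y ∪ Set.range z : Set _)).Nonempty := by
      obtain ⟨x, hx, -⟩ := hXfull ∅ Set.countable_empty (fun _ => 0)
      exact ⟨⟨x, hx⟩, trivial⟩
    have hmem : lam ∈ {c : Cardinal.{u} | ∃ U : Set (Y ∪ Set.range z : Set _),
        IsOpen U ∧ U.Nonempty ∧ #U = c} :=
      ⟨Set.univ, isOpen_univ, hne, by rw [Cardinal.mk_univ, hcard]⟩
    apply le_antisymm
    · exact csInf_le' hmem
    · refine le_csInf ⟨_, hmem⟩ ?_
      rintro c ⟨U, hU, ⟨x, hx⟩, rfl⟩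
      obtain ⟨O, hO, rfl⟩ := isOpen_induced_iff.1 hU
      refine (hbig O hO ⟨x, hx⟩).trans ?_
      refine Cardinal.mk_le_of_injective (f := fun s => ⟨⟨z s.1, hzX s.1⟩, s.2⟩) ?_
      intro s s' hss
      exact Subtype.ext (hzinj (congrArg (fun q => q.1.1) hss))
  · rintro ⟨D, hD, hdis⟩
    -- infinitely many of the dense sets miss `Y`
    let bad : Set (Order.succ κ).out := {i | ∃ x ∈ D i, x.1 ∈ Y}
    have hbad : #bad ≤ κ := by
      refine le_trans ?_ hYκ
      have hc : ∀ i : bad, ∃ x ∈ D i.1, x.1 ∈ Y := fun i => i.2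
      choose x hx hxY using hc
      refine Cardinal.mk_le_of_injective (f := fun i => (⟨(x i).1, hxY i⟩ : Y)) ?_
      intro i j hij
      have hxx : x i = x j := Subtype.ext (congrArg (fun w : Y => w.1) hij)
      by_contra hne
      exact Set.disjoint_left.1 (hdis (fun h => hne (Subtype.ext h))) (hx i) (hxx ▸ hx j)
    have hgood : Infinite (badᶜ : Set _) := by
      rw [Cardinal.infinite_iff]
      by_contra hcon
      push Not at hcon
      have h5 := Cardinal.mk_sum_compl bad
      rw [Cardinal.mk_out] at h5
      have h6 : #bad + #(badᶜ : Set _) ≤ κ :=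
        (add_le_add hbad hcon.le).trans (Cardinal.add_eq_left hκ hκ).le
      rw [h5] at h6
      exact absurd h6 (not_le.2 (Order.lt_succ κ))
    let ι := Infinite.natEmbedding (badᶜ : Set _)
    let E : ℕ → Set S := fun n => {s | (⟨z s, hzX s⟩ : (Y ∪ Set.range z : Set _)) ∈ D (ι n).1}
    have hEdis : ∀ s n k, s ∈ E n → s ∈ E k → n = k := by
      intro s n k hn hk
      by_contra hne
      have : (ι n).1 ≠ (ι k).1 := fun h => hne (ι.injective (Subtype.ext h))
      exact Set.disjoint_left.1 (hdis this) hn hk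
    have hEd : ∀ n, ∀ O : Set (((2 : Cardinal.{u}) ^ κ).out → I), IsOpen O → O.Nonempty →
        ∃ s ∈ E n, z s ∈ O := by
      intro n O hO hne
      obtain ⟨w, hwO, hwX⟩ := hXfull.dense.inter_open_nonempty _ hO hne
      obtain ⟨x, hxO, hxD⟩ := (hD (ι n).1).inter_open_nonempty (Subtype.val ⁻¹' O)
        (hO.preimage continuous_subtype_val) ⟨⟨w, hwX⟩, hwO⟩
      obtain ⟨x, hx⟩ := x
      rcases hx with hxY | ⟨s, rfl⟩
      · exact absurd ⟨_, hxD, hxY⟩ (ι n).2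
      · exact ⟨s, hxD, hxO⟩
    have hEbig : ∀ n, ∀ O : Set (((2 : Cardinal.{u}) ^ κ).out → I), IsOpen O → O.Nonempty →
        lam ≤ #{s | s ∈ E n ∧ z s ∈ O} := by
      intro n O hO hne
      by_contra hcon
      push Not at hcon
      obtain ⟨f, hf, hf0⟩ := hFz _ hcon
      have hO' : IsOpen (O ∩ {x | x (e.symm ⟨f, hf⟩) ≠ 0}) :=
        hO.inter (isOpen_ne_fun (continuous_apply _) continuous_const)
      have hne' : (O ∩ {x | x (e.symm ⟨f, hf⟩) ≠ 0}).Nonempty := by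
        have h5 := big_diff lam hl _ _ (hbig O hO hne) hcon
        obtain ⟨s, hs⟩ := Cardinal.mk_ne_zero_iff.1
          ((Cardinal.aleph0_pos.trans_le hl).trans_le h5).ne'
        refine ⟨z s, hs.1, ?_⟩
        simp only [z, Set.mem_ofPred_eq, Equiv.apply_symm_apply]
        exact fun h => hs.2 ((hf0 s).1 h)
      obtain ⟨s, hsE, hsO, hs0⟩ := hEd n _ hO' hne'
      simp only [z, Set.mem_ofPred_eq, Equiv.apply_symm_apply] at hs0
      exact hs0 ((hf0 s).2 ⟨hsE, hsO⟩)
    let q := TopologicalSpace.denseSeq I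
    let g : S → I := fun s => if h : ∃ n, s ∈ E n then q h.choose else 0
    have hg : ∀ n, ∀ s ∈ E n, g s = q n := by
      intro n s hs
      have hex : ∃ n, s ∈ E n := ⟨n, hs⟩
      have : g s = q hex.choose := dif_pos hex
      rw [this, hEdis s _ _ hex.choose_spec hs]
    have hgF : g ∈ F := by
      apply hFm
      intro t ht J hJ
      have hn : ∃ n, g ∈ t → q n ∈ J g := by
        by_cases hgt : g ∈ t
        · obtain ⟨_, hx, n, rfl⟩ := (TopologicalSpace.denseRange_denseSeq I).inter_open_nonempty _
            (hJ g hgt).1 (hJ g hgt).2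
          exact ⟨n, fun _ => hx⟩
        · exact ⟨0, fun h => absurd h hgt⟩
      obtain ⟨n, hn⟩ := hn
      have htF : ∀ f ∈ t.erase g, f ∈ F := by
        intro f hf
        rcases ht (Finset.mem_coe.2 (Finset.mem_of_mem_erase hf)) with h | h
        · exact absurd h (Finset.ne_of_mem_erase hf)
        · exact h
      let O : Set (((2 : Cardinal.{u}) ^ κ).out → I) :=
        ⋂ f : (t.erase g : Finset _), (fun x => x (e.symm ⟨f.1, htF f.1 f.2⟩)) ⁻¹' (J f.1)
      have hO : IsOpen O := isOpen_iInter_of_finite fun f =>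
        (hJ f.1 (Finset.mem_of_mem_erase f.2)).1.preimage (continuous_apply (e.symm ⟨f.1, htF f.1 f.2⟩))
      have hOne : O.Nonempty := by
        have hc : ∀ f : S → I, ∃ a : I, f ∈ t → a ∈ J f := by
          intro f
          by_cases hf : f ∈ t
          · obtain ⟨a, ha⟩ := (hJ f hf).2
            exact ⟨a, fun _ => ha⟩
          · exact ⟨0, fun h => absurd h hf⟩
        choose a ha using hc
        refine ⟨fun m => a (e m).1, Set.mem_iInter.2 fun f => ?_⟩
        simpa using ha f.1 (Finset.mem_of_mem_erase f.2)
      refine (hEbig n O hO hOne).trans (Cardinal.mk_le_mk_of_subset ?_)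
      rintro s ⟨hsE, hsO⟩ f hf
      by_cases hfg : f = g
      · subst hfg
        rw [hg n s hsE]
        exact hn hf
      · have := Set.mem_iInter.1 hsO ⟨f, Finset.mem_erase.2 ⟨hfg, hf⟩⟩
        simpa [z] using this
    obtain ⟨s, hsE, hs⟩ := hEd 0 {x | x (e.symm ⟨g, hgF⟩) ≠ q 0}
      (isOpen_ne_fun (continuous_apply _) continuous_const) (by
        obtain ⟨b, hb⟩ := exists_ne (q 0)
        exact ⟨fun _ => b, hb⟩)
    simp only [z, Set.mem_ofPred_eq, Equiv.apply_symm_apply] at hs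
    exact hs (hg 0 s hsE)
end

section
/- Let κ and λ be cardinals with ω₁ ≤ κ < λ and 2^κ = 2^λ. Then there exists a regular T1 topological space X such that |X| = Δ(X) = λ, every continuous real-valued function on X is constant (hence X is pseudocompact and connected), and X is not κ⁺-resolvable (so X is κ⁺-irresolvable). -/
open Cardinal

/-! ### A regular space with two points not separated by continuous functions -/

inductive SPt (A : Type u) : Type u
  | p : SPt A
  | q : SPt A
  | L : ℤ → A → SPt A
  | M : ℤ → A → A → SPt A

namespace SPt

variable {A : Type u}

def Op (U : Set (SPt A)) : Prop :=
  (∀ n a, L n a ∈ U → {b | M n a b ∉ U}.Finite) ∧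
  (∀ n b, L (n + 1) b ∈ U → {a | M n a b ∉ U}.Finite) ∧
  (p ∈ U → ∃ N : ℤ, ∀ n, N ≤ n → ∀ a, L n a ∈ U ∧ ∀ b, M n a b ∈ U) ∧
  (q ∈ U → ∃ N : ℤ, ∀ n, n ≤ N → ∀ a, L n a ∈ U ∧ ∀ b, M n a b ∈ U)

instance : TopologicalSpace (SPt A) where
  IsOpen := Op
  isOpen_univ := by simp [Op]
  isOpen_inter := by
    rintro U V ⟨h1, h2, h3, h4⟩ ⟨k1, k2, k3, k4⟩
    refine ⟨?_, ?_, ?_, ?_⟩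
    · rintro n a ⟨h, k⟩
      refine ((h1 n a h).union (k1 n a k)).subset ?_
      intro b hb
      simp only [Set.mem_ofPred_eq, Set.mem_inter_iff, Set.mem_union] at hb ⊢
      tauto
    · rintro n a ⟨h, k⟩
      refine ((h2 n a h).union (k2 n a k)).subset ?_
      intro b hb
      simp only [Set.mem_ofPred_eq, Set.mem_inter_iff, Set.mem_union] at hb ⊢
      tauto
    · rintro ⟨h, k⟩
      obtain ⟨N, hN⟩ := h3 h
      obtain ⟨N', hN'⟩ := k3 k
      refine ⟨max N N', fun n hn a => ?_⟩
      have e1 := hN n (le_trans (le_max_left _ _) hn) a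
      have e2 := hN' n (le_trans (le_max_right _ _) hn) a
      exact ⟨⟨e1.1, e2.1⟩, fun b => ⟨e1.2 b, e2.2 b⟩⟩
    · rintro ⟨h, k⟩
      obtain ⟨N, hN⟩ := h4 h
      obtain ⟨N', hN'⟩ := k4 k
      refine ⟨min N N', fun n hn a => ?_⟩
      have e1 := hN n (le_trans hn (min_le_left _ _)) a
      have e2 := hN' n (le_trans hn (min_le_right _ _)) a
      exact ⟨⟨e1.1, e2.1⟩, fun b => ⟨e1.2 b, e2.2 b⟩⟩
  isOpen_sUnion := by
    intro 𝒰 h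
    refine ⟨?_, ?_, ?_, ?_⟩
    · rintro n a ⟨U, hU, hx⟩
      exact ((h U hU).1 n a hx).subset fun b hb hb' => hb ⟨U, hU, hb'⟩
    · rintro n a ⟨U, hU, hx⟩
      exact ((h U hU).2.1 n a hx).subset fun b hb hb' => hb ⟨U, hU, hb'⟩
    · rintro ⟨U, hU, hx⟩
      obtain ⟨N, hN⟩ := (h U hU).2.2.1 hx
      exact ⟨N, fun n hn a => ⟨⟨U, hU, (hN n hn a).1⟩, fun b => ⟨U, hU, (hN n hn a).2 b⟩⟩⟩
    · rintro ⟨U, hU, hx⟩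
      obtain ⟨N, hN⟩ := (h U hU).2.2.2 hx
      exact ⟨N, fun n hn a => ⟨⟨U, hU, (hN n hn a).1⟩, fun b => ⟨U, hU, (hN n hn a).2 b⟩⟩⟩

theorem isOpen_iff (U : Set (SPt A)) : IsOpen U ↔ Op U := Iff.rfl

instance : T1Space (SPt A) := by
  refine ⟨fun x => ?_⟩
  rw [← isOpen_compl_iff, isOpen_iff]
  refine ⟨?_, ?_, ?_, ?_⟩
  · intro n a _
    refine Set.Subsingleton.finite ?_
    intro b hb b' hb'
    simp only [Set.mem_compl_iff, Set.mem_singleton_iff, not_not, Set.mem_ofPred_eq] at hb hb'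
    rw [← hb'] at hb
    injection hb
  · intro n a _
    refine Set.Subsingleton.finite ?_
    intro b hb b' hb'
    simp only [Set.mem_compl_iff, Set.mem_singleton_iff, not_not, Set.mem_ofPred_eq] at hb hb'
    rw [← hb'] at hb
    injection hb
  · intro _
    cases x with
    | p => exact ⟨0, by simp⟩
    | q => exact ⟨0, by simp⟩
    | L m a => exact ⟨m + 1, by intro n hn b; simp; omega⟩
    | M m a c => exact ⟨m + 1, by intro n hn b; simp; omega⟩
  · intro _
    cases x with
    | p => exact ⟨0, by simp⟩
    | q => exact ⟨0, by simp⟩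
    | L m a => exact ⟨m - 1, by intro n hn b; simp; omega⟩
    | M m a c => exact ⟨m - 1, by intro n hn b; simp; omega⟩

/-- The fibre at a point `L n a`. -/
def fib (n : ℤ) (a : A) : SPt A → Prop
  | p => False
  | q => False
  | L m b => m = n ∧ b = a
  | M m b c => (m = n ∧ b = a) ∨ (m + 1 = n ∧ c = a)

def upW (N : ℤ) : SPt A → Prop
  | p => True
  | q => False
  | L m _ => N < m
  | M m _ _ => N ≤ m

def upC (N : ℤ) : SPt A → Prop
  | p => True
  | q => False
  | L m _ => N ≤ m
  | M m _ _ => N ≤ m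

def dnW (N : ℤ) : SPt A → Prop
  | p => False
  | q => True
  | L m _ => m ≤ N
  | M m _ _ => m ≤ N

def dnC (N : ℤ) : SPt A → Prop
  | p => False
  | q => True
  | L m _ => m ≤ N + 1
  | M m _ _ => m ≤ N

theorem exists_nice (x : SPt A) (U : Set (SPt A)) (hU : IsOpen U) (hx : x ∈ U) :
    ∃ W C : Set (SPt A), IsOpen W ∧ IsClosed C ∧ x ∈ W ∧ W ⊆ C ∧ C ⊆ U := by
  have hU' := hU
  obtain ⟨h1, h2, h3, h4⟩ := hU
  cases x with
  | M n a b =>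
    refine ⟨{M n a b}, {M n a b}, ?_, isClosed_singleton, rfl, le_rfl, by simpa using hx⟩
    rw [isOpen_iff]
    refine ⟨?_, ?_, ?_, ?_⟩ <;> simp
  | L n a =>
    refine ⟨U ∩ {y | fib n a y}, U ∩ {y | fib n a y}, ?_, ?_, ⟨hx, by simp [fib]⟩, le_rfl,
      Set.inter_subset_left⟩
    · rw [isOpen_iff]
      refine ⟨?_, ?_, ?_, ?_⟩
      · rintro m b ⟨hb, hm, rfl⟩
        subst hm
        refine (h1 _ _ hb).subset ?_
        intro c hc hc'
        exact hc ⟨hc', by simp [fib]⟩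
      · rintro m b ⟨hb, hm, rfl⟩
        subst hm
        refine (h2 _ _ hb).subset ?_
        intro c hc hc'
        exact hc ⟨hc', by simp [fib]⟩
      · rintro ⟨_, h⟩
        exact h.elim
      · rintro ⟨_, h⟩
        exact h.elim
    · rw [← isOpen_compl_iff, isOpen_iff]
      refine ⟨?_, ?_, ?_, ?_⟩
      · intro m b hb
        by_cases hmb : m = n ∧ b = a
        · obtain ⟨rfl, rfl⟩ := hmb
          exact absurd ⟨hx, by simp [fib]⟩ hb
        · refine (Set.finite_singleton a).subset ?_
          intro c hc
          simp only [Set.mem_ofPred_eq, Set.mem_compl_iff, not_not, Set.mem_inter_iff, fib] at hc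
          simp only [Set.mem_singleton_iff]
          tauto
      · intro m b hb
        by_cases hmb : m + 1 = n ∧ b = a
        · obtain ⟨rfl, rfl⟩ := hmb
          exact absurd ⟨hx, by simp [fib]⟩ hb
        · refine (Set.finite_singleton a).subset ?_
          intro c hc
          simp only [Set.mem_ofPred_eq, Set.mem_compl_iff, not_not, Set.mem_inter_iff, fib] at hc
          simp only [Set.mem_singleton_iff]
          tauto
      · intro _
        refine ⟨n + 1, fun m hm c => ⟨fun h => ?_, fun d h => ?_⟩⟩
        · have := h.2.1
          omega
        · rcases h.2 with h | h <;> omega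
      · intro _
        refine ⟨n - 2, fun m hm c => ⟨fun h => ?_, fun d h => ?_⟩⟩
        · have := h.2.1
          omega
        · rcases h.2 with h | h <;> omega
  | p =>
    obtain ⟨N, hN⟩ := h3 hx
    refine ⟨{y | upW N y}, {y | upC N y}, ?_, ?_, trivial, ?_, ?_⟩
    · rw [isOpen_iff]
      refine ⟨?_, ?_, ?_, ?_⟩
      · intro n a h
        convert Set.finite_empty
        ext b
        simp [upW] at h ⊢
        omega
      · intro n a h
        convert Set.finite_empty
        ext b
        simp [upW] at h ⊢
        omega
      · intro _
        exact ⟨N + 1, fun n hn a => ⟨by simp [upW]; omega, by simp [upW]; omega⟩⟩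
      · intro h
        exact h.elim
    · rw [← isOpen_compl_iff, isOpen_iff]
      refine ⟨?_, ?_, ?_, ?_⟩
      · intro n a h
        convert Set.finite_empty
        ext b
        simp [upC] at h ⊢
        omega
      · intro n a h
        convert Set.finite_empty
        ext b
        simp [upC] at h ⊢
        omega
      · intro h
        exact absurd trivial h
      · intro _
        exact ⟨N - 1, fun n hn a => ⟨by simp [upC]; omega, by simp [upC]; omega⟩⟩
    · intro y hy
      cases y <;> simp_all [upW, upC]
      omega
    · intro y hy
      cases y <;> simp_all [upC]
  | q =>
    obtain ⟨N, hN⟩ := h4 hx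
    refine ⟨{y | dnW (N - 1) y}, {y | dnC (N - 1) y}, ?_, ?_, trivial, ?_, ?_⟩
    · rw [isOpen_iff]
      refine ⟨?_, ?_, ?_, ?_⟩
      · intro n a h
        convert Set.finite_empty
        ext b
        simp [dnW] at h ⊢
        omega
      · intro n a h
        convert Set.finite_empty
        ext b
        simp [dnW] at h ⊢
        omega
      · intro h
        exact h.elim
      · intro _
        exact ⟨N - 1, fun n hn a => ⟨by simp [dnW]; omega, by simp [dnW]; omega⟩⟩
    · rw [← isOpen_compl_iff, isOpen_iff]
      refine ⟨?_, ?_, ?_, ?_⟩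
      · intro n a h
        convert Set.finite_empty
        ext b
        simp [dnC] at h ⊢
        omega
      · intro n a h
        convert Set.finite_empty
        ext b
        simp [dnC] at h ⊢
        omega
      · intro _
        exact ⟨N + 1, fun n hn a => ⟨by simp [dnC]; omega, by simp [dnC]; omega⟩⟩
      · intro h
        exact absurd trivial h
    · intro y hy
      cases y <;> simp_all [dnW, dnC]
      omega
    · intro y hy
      cases y <;> simp_all [dnC]
      rename_i n a b
      exact (hN n (by omega) a).2 b

theorem fin1 {f : SPt A → ℝ} (hf : Continuous f) (n : ℤ) (a : A) (ε : ℝ) (hε : 0 < ε) :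
    {b | ε ≤ |f (M n a b) - f (L n a)|}.Finite := by
  have ho : IsOpen (f ⁻¹' Metric.ball (f (L n a)) ε) := Metric.isOpen_ball.preimage hf
  refine (ho.1 n a (by simp [hε])).subset ?_
  intro b hb
  simpa [Real.dist_eq] using hb

theorem fin2 {f : SPt A → ℝ} (hf : Continuous f) (n : ℤ) (b : A) (ε : ℝ) (hε : 0 < ε) :
    {a | ε ≤ |f (M n a b) - f (L (n + 1) b)|}.Finite := by
  have ho : IsOpen (f ⁻¹' Metric.ball (f (L (n + 1) b)) ε) := Metric.isOpen_ball.preimage hf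
  refine (ho.2.1 n b (by simp [hε])).subset ?_
  intro b hb
  simpa [Real.dist_eq] using hb

theorem cnt1 {f : SPt A → ℝ} (hf : Continuous f) (n : ℤ) (a : A) : {b | f (M n a b) ≠ f (L n a)}.Countable := by
  have : {b | f (M n a b) ≠ f (L n a)} ⊆
      ⋃ k : ℕ, {b | 1 / ((k : ℝ) + 1) ≤ |f (M n a b) - f (L n a)|} := by
    intro b hb
    have h0 : 0 < |f (M n a b) - f (L n a)| := abs_pos.mpr (sub_ne_zero.mpr hb)
    obtain ⟨k, hk⟩ := exists_nat_one_div_lt h0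
    exact Set.mem_iUnion.mpr ⟨k, hk.le⟩
  refine Set.Countable.mono this (Set.countable_iUnion fun k => ?_)
  exact (fin1 hf n a _ (by positivity)).countable

theorem good {f : SPt A → ℝ} (hf : Continuous f) (n : ℤ) (C : Set A) (hC : C.Countable) :
    {b | ¬ ∀ a ∈ C, f (M n a b) = f (L n a)}.Countable := by
  have : {b | ¬ ∀ a ∈ C, f (M n a b) = f (L n a)} ⊆
      ⋃ a ∈ C, {b | f (M n a b) ≠ f (L n a)} := by
    intro b hb
    simpa using hb
  exact (hC.biUnion fun a _ => cnt1 hf n a).mono this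

theorem lim {f : SPt A → ℝ} (hf : Continuous f) (n : ℤ) (C : Set A) (b : A) (hb : ∀ a ∈ C, f (M n a b) = f (L n a))
    (ε : ℝ) (hε : 0 < ε) : {a | a ∈ C ∧ ε ≤ |f (L n a) - f (L (n + 1) b)|}.Finite := by
  refine (fin2 hf n b ε hε).subset ?_
  rintro a ⟨ha, h⟩
  simpa [hb a ha] using h

theorem lim_unique {f : SPt A → ℝ} (n : ℤ) (C : Set A) (hC : C.Infinite) (x y : ℝ)
    (hx : ∀ ε > 0, {a | a ∈ C ∧ ε ≤ |f (L n a) - x|}.Finite)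
    (hy : ∀ ε > 0, {a | a ∈ C ∧ ε ≤ |f (L n a) - y|}.Finite) : x = y := by
  by_contra hne
  have h0 : 0 < |x - y| := abs_pos.mpr (sub_ne_zero.mpr hne)
  have hfin := (hx (|x - y| / 2) (by positivity)).union (hy (|x - y| / 2) (by positivity))
  obtain ⟨a, haC, ha⟩ := hC.exists_notMem_finite hfin
  simp only [Set.mem_union, Set.mem_ofPred_eq, not_or, not_and, not_le] at ha
  have e1 := ha.1 haC
  have e2 := ha.2 haC
  have : |x - y| ≤ |f (L n a) - x| + |f (L n a) - y| := by
    rw [abs_sub_comm (f (L n a)) x]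
    have := abs_add_le (x - f (L n a)) (f (L n a) - y)
    simpa using this
  linarith

theorem exists_val [Uncountable A] {f : SPt A → ℝ} (hf : Continuous f)
    (n : ℤ) : ∃ c, {b | f (L n b) ≠ c}.Countable := by
  obtain ⟨m, rfl⟩ : ∃ m, n = m + 1 := ⟨n - 1, by omega⟩
  obtain ⟨C, -, hCi, hCc⟩ : ∃ C : Set A, C ⊆ Set.univ ∧ C.Infinite ∧ C.Countable := by
    have : (Set.univ : Set A).Infinite := Set.infinite_univ
    refine ⟨Set.range (Infinite.natEmbedding A), Set.subset_univ _,
      Set.infinite_range_of_injective (Infinite.natEmbedding A).injective, Set.countable_range _⟩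
  have hg := good hf m C hCc
  obtain ⟨b0, hb0⟩ : ∃ b0, b0 ∉ {b | ¬ ∀ a ∈ C, f (M m a b) = f (L m a)} := by
    by_contra h
    exact Set.not_countable_univ (hg.mono fun b _ => by_contra fun hb => h ⟨b, hb⟩)
  refine ⟨f (L (m + 1) b0), hg.mono ?_⟩
  intro b hb hgood
  refine hb (lim_unique m C hCi _ _ (lim hf m C b hgood) (lim hf m C b0 ?_))
  simpa using hb0

theorem val_succ [Uncountable A] {f : SPt A → ℝ} (hf : Continuous f)
    (n : ℤ) (c c' : ℝ) (hc : {b | f (L n b) ≠ c}.Countable)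
    (hc' : {b | f (L (n + 1) b) ≠ c'}.Countable) : c = c' := by
  have hinf : {b | f (L n b) ≠ c}ᶜ.Infinite := by
    intro hfin
    refine Set.not_countable_univ (α := A) ?_
    rw [← Set.union_compl_self {b | f (L n b) ≠ c}]
    exact hc.union hfin.countable
  obtain ⟨C, hCs, hCi, hCc⟩ : ∃ C : Set A, C ⊆ {b | f (L n b) ≠ c}ᶜ ∧ C.Infinite ∧
      C.Countable := by
    have := hinf.to_subtype
    refine ⟨Set.range fun k => (Infinite.natEmbedding ↥({b | f (L n b) ≠ c}ᶜ) k : A), ?_, ?_,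
      Set.countable_range _⟩
    · rintro _ ⟨k, rfl⟩
      exact Subtype.coe_prop _
    · exact Set.infinite_range_of_injective
        (Subtype.val_injective.comp (Infinite.natEmbedding _).injective)
  have hg := (good hf n C hCc).union hc'
  obtain ⟨b, hb⟩ : ∃ b, b ∉ {b | ¬ ∀ a ∈ C, f (M n a b) = f (L n a)} ∪
      {b | f (L (n + 1) b) ≠ c'} := by
    by_contra h
    exact Set.not_countable_univ (hg.mono fun b _ => by_contra fun hb => h ⟨b, hb⟩)
  simp only [Set.mem_union, Set.mem_ofPred_eq, not_or, not_not] at hb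
  refine lim_unique (f := f) n C hCi c c' ?_ ?_
  · intro ε hε
    convert Set.finite_empty
    ext a
    simp only [Set.mem_ofPred_eq, Set.mem_empty_iff_false, iff_false, not_and, not_le]
    intro ha
    have := hCs ha
    simp only [Set.mem_compl_iff, Set.mem_ofPred_eq, not_not] at this
    simp [this, hε]
  · rw [← hb.2]
    exact lim hf n C b hb.1

theorem exists_val_all [Uncountable A] {f : SPt A → ℝ} (hf : Continuous f) : ∃ c, ∀ n, ∃ b, f (L n b) = c := by
  choose c hc using exists_val hf
  have hs : ∀ n, c n = c (n + 1) := fun n => val_succ hf n _ _ (hc n) (hc (n + 1))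
  have hall : ∀ n, c n = c 0 := by
    intro n
    induction n using Int.induction_on with
    | zero => rfl
    | succ k ih => rw [← hs, ih]
    | pred k ih => rw [hs, ← ih]; congr 1; omega
  refine ⟨c 0, fun n => ?_⟩
  by_contra! h
  refine Set.not_countable_univ ((hc n).mono fun b _ => ?_)
  rw [Set.mem_ofPred_eq, hall]
  exact h b

theorem p_eq_q [Uncountable A] {f : SPt A → ℝ} (hf : Continuous f) : f p = f q := by
  obtain ⟨c, hc⟩ := exists_val_all hf
  have hp : f p = c := by
    by_contra hne
    have ho : IsOpen (f ⁻¹' {c}ᶜ) := isOpen_compl_singleton.preimage hf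
    obtain ⟨N, hN⟩ := ho.2.2.1 hne
    obtain ⟨b, hb⟩ := hc N
    exact (hN N le_rfl b).1 hb
  have hq : f q = c := by
    by_contra hne
    have ho : IsOpen (f ⁻¹' {c}ᶜ) := isOpen_compl_singleton.preimage hf
    obtain ⟨N, hN⟩ := ho.2.2.2 hne
    obtain ⟨b, hb⟩ := hc N
    exact (hN N le_rfl b).1 hb
  rw [hp, hq]

theorem mk_le (κ : Cardinal.{u}) (hκ : ℵ₀ ≤ κ) (hA : #A ≤ κ) : #(SPt A) ≤ κ := by
  let φ : SPt A → Option (Option ((ℤ × A) ⊕ (ℤ × A × A))) := fun x =>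
    match x with
    | p => none
    | q => some none
    | L n a => some (some (Sum.inl (n, a)))
    | M n a b => some (some (Sum.inr (n, a, b)))
  have hφ : Function.Injective φ := by
    intro x y h
    cases x <;> cases y <;> simp_all [φ]
  refine (Cardinal.mk_le_of_injective hφ).trans ?_
  have h1 : (1 : Cardinal) ≤ κ := one_le_aleph0.trans hκ
  have hm : ∀ a b : Cardinal.{u}, a ≤ κ → b ≤ κ → a * b ≤ κ := fun a b ha hb =>
    (mul_le_mul' ha hb).trans (Cardinal.mul_eq_self hκ).le
  have ha : ∀ a b : Cardinal.{u}, a ≤ κ → b ≤ κ → a + b ≤ κ := fun a b ha hb =>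
    (add_le_add ha hb).trans (Cardinal.add_eq_self hκ).le
  simp only [Cardinal.mk_option, Cardinal.mk_sum, Cardinal.mk_prod, Cardinal.lift_id,
    Cardinal.lift_uzero, Cardinal.mk_int, Cardinal.lift_aleph0]
  refine ha _ _ (ha _ _ (ha _ _ (hm _ _ hκ hA) (hm _ _ hκ (hm _ _ hA hA))) h1) h1

end SPt

/-! ### A regular space with only constant continuous real functions -/

inductive ZPt (A : Type u) : Type u
  | o : ZPt A
  | mk : ZPt A → ZPt A → {s : SPt A // s ≠ SPt.p ∧ s ≠ SPt.q} → ZPt A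

namespace ZPt

variable {A : Type u}

open Classical in
noncomputable def j (x y : ZPt A) (s : SPt A) : ZPt A :=
  if h : s ≠ SPt.p ∧ s ≠ SPt.q then mk x y ⟨s, h⟩ else if s = SPt.p then x else y

theorem j_p (x y : ZPt A) : j x y SPt.p = x := by simp [j]

theorem j_q (x y : ZPt A) : j x y SPt.q = y := by simp [j]

theorem j_mk (x y : ZPt A) (s : {s : SPt A // s ≠ SPt.p ∧ s ≠ SPt.q}) :
    j x y s.1 = mk x y s := by simp [j, s.2]

noncomputable instance : TopologicalSpace (ZPt A) :=
  ⨆ x : ZPt A, ⨆ y : ZPt A, TopologicalSpace.coinduced (j x y) inferInstance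

theorem isOpen_iff (U : Set (ZPt A)) : IsOpen U ↔ ∀ x y, IsOpen (j x y ⁻¹' U) := by
  simp only [isOpen_iSup_iff, isOpen_coinduced]

theorem isClosed_iff (U : Set (ZPt A)) : IsClosed U ↔ ∀ x y, IsClosed (j x y ⁻¹' U) := by
  simp only [← isOpen_compl_iff, isOpen_iff, Set.preimage_compl]

theorem continuous_j (x y : ZPt A) : Continuous (j x y) :=
  ⟨fun U hU => (isOpen_iff U).1 hU x y⟩

theorem eq_const [Uncountable A] (f : ZPt A → ℝ) (hf : Continuous f) : ∃ c, ∀ x, f x = c := by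
  refine ⟨f o, fun x => ?_⟩
  have := SPt.p_eq_q (hf.comp (continuous_j x o))
  simpa [j_p, j_q] using this

theorem preimage_singleton_finite (x y z : ZPt A) : (j x y ⁻¹' {z}).Finite := by
  refine Set.Finite.subset
    (s := {SPt.p} ∪ {SPt.q} ∪ {s | ∃ h : s ≠ SPt.p ∧ s ≠ SPt.q, mk x y ⟨s, h⟩ = z}) ?_ ?_
  · refine ((Set.finite_singleton _).union (Set.finite_singleton _)).union
      (Set.Subsingleton.finite ?_)
    rintro s ⟨h, hs⟩ t ⟨k, ht⟩
    rw [← ht] at hs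
    simpa using hs
  · intro s hs
    by_cases h : s ≠ SPt.p ∧ s ≠ SPt.q
    · right
      exact ⟨h, by simpa [j, h] using hs⟩
    · left
      simp only [Set.mem_union, Set.mem_singleton_iff]
      tauto

instance : T1Space (ZPt A) :=
  ⟨fun z => (isClosed_iff _).2 fun x y => (preimage_singleton_finite x y z).isClosed⟩

section reg

/-- the open set built by recursion -/
def Wset (P Q R : ZPt A → ZPt A → Set (SPt A)) (o0 : Prop) : ZPt A → Prop
  | o => o0
  | mk x y s => (Wset P Q R o0 x ∧ s.1 ∈ P x y) ∨ (Wset P Q R o0 y ∧ s.1 ∈ Q x y) ∨ s.1 ∈ R x y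

def Cset (W : ZPt A → Prop) (P Q R : ZPt A → ZPt A → Set (SPt A)) (o0 : Prop) : ZPt A → Prop
  | o => o0
  | mk x y s => (W x ∧ s.1 ∈ P x y) ∨ (W y ∧ s.1 ∈ Q x y) ∨ s.1 ∈ R x y

theorem exists_nice (z : ZPt A) (U : Set (ZPt A)) (hU : IsOpen U) (hz : z ∈ U) :
    ∃ W C : Set (ZPt A), IsOpen W ∧ IsClosed C ∧ z ∈ W ∧ W ⊆ C ∧ C ⊆ U := by
  have hUo := (isOpen_iff U).1 hU
  have hP : ∀ x y : ZPt A, ∃ W C : Set (SPt A), IsOpen W ∧ IsClosed C ∧ SPt.q ∉ C ∧ W ⊆ C ∧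
      (x ∈ U → SPt.p ∈ W ∧ C ⊆ j x y ⁻¹' U) := by
    intro x y
    by_cases hx : x ∈ U
    · obtain ⟨W, C, h1, h2, h3, h4, h5⟩ := SPt.exists_nice SPt.p (j x y ⁻¹' U ∩ {SPt.q}ᶜ)
        ((hUo x y).inter isOpen_compl_singleton) ⟨by simpa [j_p] using hx, by simp⟩
      exact ⟨W, C, h1, h2, fun h => (h5 h).2 rfl, h4, fun _ => ⟨h3, fun s hs => (h5 hs).1⟩⟩
    · exact ⟨∅, ∅, isOpen_empty, isClosed_empty, by simp, le_rfl, fun h => absurd h hx⟩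
  have hQ : ∀ x y : ZPt A, ∃ W C : Set (SPt A), IsOpen W ∧ IsClosed C ∧ SPt.p ∉ C ∧ W ⊆ C ∧
      (y ∈ U → SPt.q ∈ W ∧ C ⊆ j x y ⁻¹' U) := by
    intro x y
    by_cases hx : y ∈ U
    · obtain ⟨W, C, h1, h2, h3, h4, h5⟩ := SPt.exists_nice SPt.q (j x y ⁻¹' U ∩ {SPt.p}ᶜ)
        ((hUo x y).inter isOpen_compl_singleton) ⟨by simpa [j_q] using hx, by simp⟩
      exact ⟨W, C, h1, h2, fun h => (h5 h).2 rfl, h4, fun _ => ⟨h3, fun s hs => (h5 hs).1⟩⟩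
    · exact ⟨∅, ∅, isOpen_empty, isClosed_empty, by simp, le_rfl, fun h => absurd h hx⟩
  have hR : ∀ x y : ZPt A, ∃ W C : Set (SPt A), IsOpen W ∧ IsClosed C ∧ SPt.p ∉ C ∧ SPt.q ∉ C ∧
      W ⊆ C ∧ C ⊆ j x y ⁻¹' U ∧ (∀ s, z = mk x y s → s.1 ∈ W) := by
    intro x y
    by_cases hx : ∃ s, z = mk x y s
    · obtain ⟨s, hs⟩ := hx
      obtain ⟨W, C, h1, h2, h3, h4, h5⟩ := SPt.exists_nice s.1
        (j x y ⁻¹' U ∩ ({SPt.p}ᶜ ∩ {SPt.q}ᶜ))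
        ((hUo x y).inter (isOpen_compl_singleton.inter isOpen_compl_singleton))
        ⟨by rw [Set.mem_preimage, j_mk, ← hs]; exact hz, s.2.1, s.2.2⟩
      refine ⟨W, C, h1, h2, fun h => (h5 h).2.1 rfl, fun h => (h5 h).2.2 rfl, h4,
        fun s hs => (h5 hs).1, ?_⟩
      intro t ht
      rw [hs] at ht
      injection ht with _ _ ht
      rw [← ht]
      exact h3
    · exact ⟨∅, ∅, isOpen_empty, isClosed_empty, by simp, by simp, le_rfl, by simp,
        fun s hs => absurd ⟨s, hs⟩ hx⟩
  choose P PC hPo hPc hPq hPs hPU using hP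
  choose Q QC hQo hQc hQp hQs hQU using hQ
  choose R RC hRo hRc hRp hRq hRs hRU hRz using hR
  set W : ZPt A → Prop := Wset P Q R (z = o) with hW
  set C : ZPt A → Prop := Cset W PC QC RC (z = o) with hC
  have hWmk : ∀ x y s, W (mk x y s) ↔ (W x ∧ s.1 ∈ P x y) ∨ (W y ∧ s.1 ∈ Q x y) ∨ s.1 ∈ R x y :=
    fun x y s => by rw [hW, Wset]
  have hCmk : ∀ x y s, C (mk x y s) ↔
      (W x ∧ s.1 ∈ PC x y) ∨ (W y ∧ s.1 ∈ QC x y) ∨ s.1 ∈ RC x y :=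
    fun x y s => by rw [hC, Cset]
  have hWC : ∀ x, W x → C x := by
    intro x hx
    cases x with
    | o => exact hx
    | mk x y s =>
      rw [hWmk] at hx
      rw [hCmk]
      rcases hx with h | h | h
      · exact Or.inl ⟨h.1, hPs _ _ h.2⟩
      · exact Or.inr (Or.inl ⟨h.1, hQs _ _ h.2⟩)
      · exact Or.inr (Or.inr (hRs _ _ h))
  have hCU : ∀ x, C x → x ∈ U := by
    intro x
    induction x with
    | o =>
      intro h
      have h : z = o := h
      rw [← h]
      exact hz
    | mk x y s ihx ihy =>
      intro h
      rw [hCmk] at h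
      rw [← j_mk]
      rcases h with h | h | h
      · exact (hPU x y (ihx (hWC _ h.1))).2 h.2
      · exact (hQU x y (ihy (hWC _ h.1))).2 h.2
      · exact hRU x y h
  refine ⟨{x | W x}, {x | C x}, ?_, ?_, ?_, hWC, hCU⟩
  · rw [isOpen_iff]
    intro x y
    have : j x y ⁻¹' {x | W x} = {s | W x ∧ s ∈ P x y} ∪ ({s | W y ∧ s ∈ Q x y} ∪ R x y) := by
      ext s
      by_cases hs : s ≠ SPt.p ∧ s ≠ SPt.q
      · have := j_mk x y ⟨s, hs⟩
        simp only at this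
        simp only [Set.mem_preimage, this, Set.mem_ofPred_eq, hWmk, Set.mem_union]
      · by_cases hp : s = SPt.p
        · subst hp
          have h1 : SPt.p ∉ Q x y := fun h => hQp x y (hQs _ _ h)
          have h2 : SPt.p ∉ R x y := fun h => hRp x y (hRs _ _ h)
          have h3 : W x → SPt.p ∈ P x y := fun h => (hPU x y (hCU x (hWC x h))).1
          simp only [Set.mem_preimage, j_p, Set.mem_ofPred_eq, Set.mem_union]
          tauto
        · have hq : s = SPt.q := by tauto
          subst hq
          have h1 : SPt.q ∉ P x y := fun h => hPq x y (hPs _ _ h)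
          have h2 : SPt.q ∉ R x y := fun h => hRq x y (hRs _ _ h)
          have h3 : W y → SPt.q ∈ Q x y := fun h => (hQU x y (hCU y (hWC y h))).1
          simp only [Set.mem_preimage, j_q, Set.mem_ofPred_eq, Set.mem_union]
          tauto
    rw [this]
    refine IsOpen.union ?_ (IsOpen.union ?_ (hRo x y))
    · exact isOpen_const.and (hPo x y)
    · exact isOpen_const.and (hQo x y)
  · rw [isClosed_iff]
    intro x y
    have : j x y ⁻¹' {x | C x} = ({s | W x ∧ s ∈ PC x y} ∪ ({s | W y ∧ s ∈ QC x y} ∪ RC x y)) ∪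
        ({s | C x ∧ s ∈ ({SPt.p} : Set (SPt A))} ∪ {s | C y ∧ s ∈ ({SPt.q} : Set (SPt A))}) := by
      ext s
      by_cases hs : s ≠ SPt.p ∧ s ≠ SPt.q
      · have := j_mk x y ⟨s, hs⟩
        simp only at this
        simp only [Set.mem_preimage, this, Set.mem_ofPred_eq, hCmk, Set.mem_union,
          Set.mem_singleton_iff]
        tauto
      · by_cases hp : s = SPt.p
        · subst hp
          have h1 := hQp x y
          have h2 := hRp x y
          have h3 := hWC x
          have h4 : (SPt.p : SPt A) ≠ SPt.q := by simp
          simp only [Set.mem_preimage, j_p, Set.mem_ofPred_eq, Set.mem_union,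
            Set.mem_singleton_iff]
          tauto
        · have hq : s = SPt.q := by tauto
          subst hq
          have h1 := hPq x y
          have h2 := hRq x y
          have h3 := hWC y
          simp only [Set.mem_preimage, j_q, Set.mem_ofPred_eq, Set.mem_union,
            Set.mem_singleton_iff]
          tauto
    rw [this]
    have hcst : ∀ (p : Prop) (T : Set (SPt A)), IsClosed T → IsClosed {s | p ∧ s ∈ T} := by
      intro p T hT
      by_cases hp : p <;> simp [hp, hT]
    exact ((hcst _ _ (hPc x y)).union ((hcst _ _ (hQc x y)).union (hRc x y))).union
      ((hcst _ _ isClosed_singleton).union (hcst _ _ isClosed_singleton))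
  · show W z
    cases hzz : z with
    | o => exact hzz
    | mk x y s =>
      rw [hWmk]
      exact Or.inr (Or.inr (hRz x y s hzz))

instance : RegularSpace (ZPt A) := by
  refine RegularSpace.of_exists_mem_nhds_isClosed_subset fun x s hs => ?_
  obtain ⟨U, hUs, hU, hx⟩ := mem_nhds_iff.1 hs
  obtain ⟨W, C, h1, h2, h3, h4, h5⟩ := exists_nice x U hU hx
  exact ⟨C, Filter.mem_of_superset (h1.mem_nhds h3) h4, h2, h5.trans hUs⟩

end reg

/-- arities for the comparison with W-types -/
def ar (A : Type u) : Option (SPt A) → Type u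
  | none => PEmpty
  | some _ => ULift Bool

instance (a : Option (SPt A)) : Finite (ar A a) := by
  cases a <;> simp only [ar] <;> infer_instance

def toW : ZPt A → WType (ar A)
  | o => ⟨none, fun e => PEmpty.elim e⟩
  | mk x y s => ⟨some s.1, fun b => cond b.down (toW x) (toW y)⟩

theorem toW_injective : Function.Injective (toW (A := A)) := by
  intro x
  induction x with
  | o =>
    intro y h
    cases y with
    | o => rfl
    | mk a b s => simp [toW] at h
  | mk a b s iha ihb =>
    intro y h
    cases y with
    | o => simp [toW] at h
    | mk a' b' s' =>
      simp only [toW, WType.mk.injEq, Option.some.injEq] at h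
      obtain ⟨h1, h2⟩ := h
      have h1 : s = s' := Subtype.ext h1
      subst h1
      have h2 := eq_of_heq h2
      have e1 := congrFun h2 ⟨true⟩
      have e2 := congrFun h2 ⟨false⟩
      simp only [cond_true, cond_false] at e1 e2
      rw [iha e1, ihb e2]

theorem mk_le (κ : Cardinal.{u}) (hκ : ℵ₀ ≤ κ) (hA : #A ≤ κ) : #(ZPt A) ≤ κ := by
  refine (Cardinal.mk_le_of_injective toW_injective).trans ?_
  refine (WType.cardinalMk_le_max_aleph0_of_finite).trans (max_le ?_ hκ)
  rw [Cardinal.mk_option]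
  exact (add_le_add (SPt.mk_le κ hκ hA) (one_le_aleph0.trans hκ)).trans (Cardinal.add_eq_self hκ).le

end ZPt

/-- Summary of the construction. -/
theorem exists_regular_const (κ : Cardinal.{u}) (h1 : Cardinal.aleph 1 ≤ κ) :
    ∃ (Z : Type u) (_ : TopologicalSpace Z), RegularSpace Z ∧ T1Space Z ∧ Nontrivial Z ∧
      #Z ≤ κ ∧ ∀ f : Z → ℝ, Continuous f → ∃ c, ∀ x, f x = c := by
  have h0 : ℵ₀ < κ := lt_of_lt_of_le (by simp) h1
  have hA : Uncountable κ.out := by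
    rw [← Cardinal.aleph0_lt_mk_iff]
    simpa using h0
  obtain ⟨a⟩ : Nonempty κ.out := inferInstance
  refine ⟨ZPt κ.out, inferInstance, inferInstance, inferInstance,
    ⟨ZPt.o, ZPt.mk ZPt.o ZPt.o ⟨SPt.L 0 a, by simp⟩, by simp⟩,
    ZPt.mk_le κ h0.le (by simp), ZPt.eq_const⟩

/-! ### Independent families -/

section indep

open Classical in
/-- The basic independent family, indexed by subsets of `K`. -/
noncomputable def hfun {K Z : Type u} [Zero Z] (A : Set K) (q : Finset K × (Finset K →₀ Z)) : Z :=
  q.2 (q.1.filter (· ∈ A))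

open Classical in
theorem exists_sep_s9 {K : Type u} (s : Finset (Set K)) :
    ∃ F : Finset K, Set.InjOn (fun A : Set K => F.filter (· ∈ A)) s := by
  have : ∀ p : Set K × Set K, ∃ F : Finset K, p.1 ≠ p.2 → ∃ x ∈ F, ¬ (x ∈ p.1 ↔ x ∈ p.2) := by
    rintro ⟨A, B⟩
    by_cases h : A = B
    · exact ⟨∅, fun h' => absurd h h'⟩
    · have : ∃ x, ¬ (x ∈ A ↔ x ∈ B) := by
        by_contra hh
        push Not at hh
        exact h (Set.ext hh)
      obtain ⟨x, hx⟩ := this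
      exact ⟨{x}, fun _ => ⟨x, by simp, hx⟩⟩
  choose F hF using this
  refine ⟨(s ×ˢ s).biUnion F, ?_⟩
  intro A hA B hB hAB
  by_contra hne
  obtain ⟨x, hx, hx'⟩ := hF (A, B) hne
  have hxm : x ∈ (s ×ˢ s).biUnion F :=
    Finset.mem_biUnion.2 ⟨(A, B), Finset.mem_product.2 ⟨hA, hB⟩, hx⟩
  apply hx'
  have := Finset.ext_iff.1 hAB x
  simpa only [Finset.mem_filter, hxm, true_and] using this

theorem hfun_indep {K Z : Type u} [Zero Z] (s : Finset (Set K)) (v : Set K → Z) :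
    ∃ q, ∀ A ∈ s, hfun A q = v A := by
  classical
  obtain ⟨F, hF⟩ := exists_sep_s9 s
  let g : Set K → Finset K := fun A => F.filter (· ∈ A)
  let w : Finset K → Z := fun t => if h : ∃ A ∈ s, g A = t then v h.choose else 0
  refine ⟨(F, Finsupp.onFinset (s.image g) w ?_), ?_⟩
  · intro t ht
    by_contra hn
    apply ht
    have : ¬ ∃ A ∈ s, g A = t := by simpa using hn
    simp only [w, dif_neg this]
  · intro A hA
    have hex : ∃ B ∈ s, g B = g A := ⟨A, hA, rfl⟩
    show w (F.filter (· ∈ A)) = v A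
    have : w (g A) = v A := by
      simp only [w, dif_pos hex]
      rw [hF hex.choose_spec.1 hA hex.choose_spec.2]
    convert this

theorem mk_index_le {K Z : Type u} [Zero Z] [Nontrivial Z] (μ : Cardinal.{u}) (hμ : ℵ₀ ≤ μ)
    (hK : #K = μ) (hZ : #Z ≤ μ) : #(Finset K × (Finset K →₀ Z)) = μ := by
  have : Infinite K := by rw [Cardinal.infinite_iff, hK]; exact hμ
  rw [Cardinal.mk_prod, Cardinal.lift_id, Cardinal.lift_id, Cardinal.mk_finset_of_infinite,
    Cardinal.mk_finsupp_of_infinite, Cardinal.mk_finset_of_infinite, hK, max_eq_left hZ,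
    Cardinal.mul_eq_self hμ]

/-- Every continuous function is constant on a set of the form `range d`. -/
theorem const_on_range {K Z G : Type u} [Zero Z] [TopologicalSpace Z]
    (hZ : ∀ f : Z → ℝ, Continuous f → ∃ c, ∀ x, f x = c) (c : G → Set K) (X : Set (G → Z))
    (hX : ∀ q, (fun g => hfun (c g) q) ∈ X) (f : X → ℝ) (hf : Continuous f) :
    ∃ r, ∀ q, f ⟨fun g => hfun (c g) q, hX q⟩ = r := by
  classical
  refine ⟨f ⟨fun g => hfun (c g) (∅, 0), hX _⟩, ?_⟩
  rintro ⟨F, φ⟩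
  have key : ∀ (s : Finset (Finset K)) (φ : Finset K →₀ Z), φ.support ⊆ s →
      f ⟨fun g => hfun (c g) (F, φ), hX _⟩ = f ⟨fun g => hfun (c g) (F, 0), hX _⟩ := by
    intro s
    induction s using Finset.induction_on with
    | empty =>
      intro φ hφ
      have : φ = 0 := by simpa using hφ
      rw [this]
    | insert t s hts ih =>
      intro φ hφ
      rw [← ih (φ.update t 0)]
      · let m : Z → X := fun z => ⟨fun g => hfun (c g) (F, φ.update t z), hX _⟩
        have hm : Continuous m := by
          refine Continuous.subtype_mk (continuous_pi fun g => ?_) _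
          by_cases h : F.filter (· ∈ c g) = t
          · simp only [hfun, Finsupp.coe_update, h, Function.update_self]
            exact continuous_id
          · simp only [hfun, Finsupp.coe_update, Function.update_of_ne h]
            exact continuous_const
        obtain ⟨r, hr⟩ := hZ _ (hf.comp hm)
        have e1 := hr (φ t)
        have e2 := hr 0
        simp only [Function.comp, m, Finsupp.update_self] at e1 e2
        rw [e1, e2]
      · intro x hx
        rw [Finsupp.support_update_zero, Finset.mem_erase] at hx
        have := hφ hx.2
        rw [Finset.mem_insert] at this
        tauto
  rw [key _ φ le_rfl]
  congr 1

def Indep {Λ Z : Type u} [TopologicalSpace Z] (G : Set (Λ → Z)) : Prop :=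
  ∀ s : Finset (Λ → Z), (s : Set (Λ → Z)) ⊆ G → ∀ U : (Λ → Z) → Set Z,
    (∀ g ∈ s, IsOpen (U g) ∧ (U g).Nonempty) → ∃ a, ∀ g ∈ s, g a ∈ U g

theorem Indep.exists_maximal {Λ Z : Type u} [TopologicalSpace Z] (G : Set (Λ → Z)) (hG : Indep G) :
    ∃ H, G ⊆ H ∧ Maximal Indep H := by
  refine zorn_subset_nonempty {G | Indep G} ?_ G hG
  intro c hc hch hne
  refine ⟨⋃₀ c, ?_, fun s hs => Set.subset_sUnion_of_mem hs⟩
  intro s hs U hU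
  obtain ⟨t, htc, hst⟩ := hch.directedOn.exists_mem_subset_of_finset_subset_biUnion hne
    (f := fun x => x) (s := s) (by simpa [Set.sUnion_eq_biUnion] using hs)
  exact hc htc s hst U hU

/-- dense subsets of a product from independence -/
theorem Indep.exists_mem {Λ Z : Type u} [TopologicalSpace Z] {G : Set (Λ → Z)} (hG : Indep G)
    (O : Set (G → Z)) (hO : IsOpen O) (hne : O.Nonempty) : ∃ a : Λ, (fun g : G => g.1 a) ∈ O := by
  classical
  obtain ⟨x, hx⟩ := hne
  obtain ⟨I, u, hu, hsub⟩ := isOpen_pi_iff.1 hO x hx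
  let U : (Λ → Z) → Set Z := fun g => if h : g ∈ G then u ⟨g, h⟩ else Set.univ
  obtain ⟨a, ha⟩ := hG (I.image Subtype.val) (by
    intro g hg
    simp only [Finset.coe_image, Set.mem_image] at hg
    obtain ⟨g', _, rfl⟩ := hg
    exact g'.2) U (by
    intro g hg
    obtain ⟨g', hg', rfl⟩ := Finset.mem_image.1 hg
    simp only [U, g'.2, dif_pos]
    exact ⟨(hu g' hg').1, ⟨_, (hu g' hg').2⟩⟩)
  refine ⟨a, hsub ?_⟩
  intro g hg
  have := ha g.1 (Finset.mem_image_of_mem _ hg)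
  simpa [U, g.2] using this

/-- the starting family -/
theorem exists_start {K Z : Type u} [Zero Z] [Nontrivial Z] [TopologicalSpace Z]
    (μ : Cardinal.{u}) (hμ : ℵ₀ ≤ μ) (hK : #K = μ) (hZ : #Z ≤ μ) :
    ∃ (Λ : Type u) (G : Set (Λ → Z)), #Λ = μ ∧ Indep G ∧
      (∀ a b : Λ, a ≠ b → ∃ g ∈ G, g a ≠ g b) ∧
      (∀ S : Set Λ, #S < μ → ∃ g ∈ G, ∀ a ∈ S, g a = 0) := by
  classical
  obtain ⟨z1, hz1⟩ := exists_ne (0 : Z)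
  let Λ := (Finset K × (Finset K →₀ Z)) × K
  have hΛ : #Λ = μ := by
    simp only [Λ]
    rw [Cardinal.mk_prod, Cardinal.lift_id, Cardinal.lift_id, mk_index_le μ hμ hK hZ, hK,
      Cardinal.mul_eq_self hμ]
  have hΛinf : Infinite Λ := by rw [Cardinal.infinite_iff, hΛ]; exact hμ
  obtain ⟨c⟩ : Nonempty (Set Λ × Λ ↪ Set K) := by
    rw [← Cardinal.le_def]
    rw [Cardinal.mk_prod, Cardinal.lift_id, Cardinal.lift_id, Cardinal.mk_set, Cardinal.mk_set,
      hΛ, hK]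
    have h2 : μ ≤ 2 ^ μ := (Cardinal.cantor μ).le
    exact (mul_le_mul' le_rfl h2).trans (Cardinal.mul_eq_self (hμ.trans h2)).le
  let g : Set Λ × Λ → Λ → Z := fun p x =>
    if x ∈ p.1 then (if x = p.2 then z1 else 0) else hfun (c p) x.1
  refine ⟨Λ, g '' {p | #p.1 < μ}, hΛ, ?_, ?_, ?_⟩
  · intro s hs U hU
    have hch : ∀ f : Λ → Z, ∃ p : Set Λ × Λ, f ∈ s → #p.1 < μ ∧ g p = f := by
      intro f
      by_cases hf : f ∈ s
      · obtain ⟨p, hp, hpf⟩ := hs hf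
        exact ⟨p, fun _ => ⟨hp, hpf⟩⟩
      · exact ⟨(∅, Classical.arbitrary _), fun h => absurd h hf⟩
    choose p hp using hch
    have hv : ∀ f, ∃ z, f ∈ s → z ∈ U f := by
      intro f
      by_cases hf : f ∈ s
      · obtain ⟨z, hz⟩ := (hU f hf).2
        exact ⟨z, fun _ => hz⟩
      · exact ⟨0, fun h => absurd h hf⟩
    choose v hv using hv
    have hinj : ∀ f ∈ s, ∀ f' ∈ s, c (p f) = c (p f') → f = f' := by
      intro f hf f' hf' h
      rw [← (hp f hf).2, ← (hp f' hf').2, c.injective h]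
    obtain ⟨q, hq⟩ := hfun_indep (s.image fun f => c (p f))
      (fun A => if h : ∃ f ∈ s, c (p f) = A then v h.choose else 0)
    have hq' : ∀ f ∈ s, hfun (c (p f)) q = v f := by
      intro f hf
      rw [hq _ (Finset.mem_image_of_mem _ hf)]
      have hex : ∃ f' ∈ s, c (p f') = c (p f) := ⟨f, hf, rfl⟩
      rw [dif_pos hex, hinj _ hex.choose_spec.1 f hf hex.choose_spec.2]
    have hsmall : ∀ t : Finset (Λ → Z), t ⊆ s → #(⋃ f ∈ t, (p f).1 : Set Λ) < μ := by
      intro t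
      induction t using Finset.induction_on with
      | empty =>
        intro _
        simp only [Finset.notMem_empty, Set.iUnion_of_empty, Set.iUnion_empty, Cardinal.mk_eq_zero]
        exact lt_of_lt_of_le Cardinal.aleph0_pos hμ
      | insert f t hft ih =>
        intro hsub
        rw [Finset.set_biUnion_insert]
        refine (Cardinal.mk_union_le _ _).trans_lt (Cardinal.add_lt_of_lt hμ ?_ ?_)
        · exact (hp f (hsub (Finset.mem_insert_self _ _))).1
        · exact ih fun x hx => hsub (Finset.mem_insert_of_mem hx)
    obtain ⟨k, hk⟩ : ∃ k : K, (q, k) ∉ (⋃ f ∈ s, (p f).1 : Set Λ) := by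
      by_contra! hall
      have : #K ≤ #(⋃ f ∈ s, (p f).1 : Set Λ) :=
        Cardinal.mk_le_of_injective (f := fun k => ⟨(q, k), hall k⟩) (by
          intro k k' h
          exact congrArg Prod.snd (congrArg Subtype.val h))
      exact absurd (this.trans_lt (hsmall s le_rfl)) (by rw [hK]; exact lt_irrefl _)
    refine ⟨(q, k), fun f hf => ?_⟩
    have hnot : (q, k) ∉ (p f).1 := fun h => hk (Set.mem_biUnion hf h)
    have : f (q, k) = v f := by
      rw [← hq' f hf]
      conv_lhs => rw [← (hp f hf).2]
      simp only [g, if_neg hnot]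
    rw [this]
    exact hv f hf
  · intro a b hab
    refine ⟨g ({a, b}, a), ⟨_, ?_, rfl⟩, ?_⟩
    · exact (Cardinal.lt_aleph0_of_finite _).trans_le hμ
    · simp [g, hab.symm, hz1]
  · intro S hS
    obtain ⟨a, ha⟩ : ∃ a, a ∉ S := by
      by_contra! h
      have : S = Set.univ := Set.eq_univ_of_forall h
      rw [this, Cardinal.mk_univ, hΛ] at hS
      exact lt_irrefl _ hS
    refine ⟨g (S, a), ⟨_, hS, rfl⟩, fun x hx => ?_⟩
    have : x ≠ a := fun h => ha (h ▸ hx)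
    simp [g, hx, this]

end indep

/-- if `ω₁ ≤ κ < λ` and `2^κ = 2^λ`, then there is a regular T1
space `X` with `|X| = Δ(X) = λ` on which every continuous real-valued function
is constant, and which is not `κ⁺`-resolvable. -/
theorem stmt9 (κ lam : Cardinal.{u}) (h1 : Cardinal.aleph 1 ≤ κ) (h2 : κ < lam)
    (h3 : (2 : Cardinal.{u}) ^ κ = 2 ^ lam) :
    ∃ (X : Type u) (_ : TopologicalSpace X),
      RegularSpace X ∧ T1Space X ∧ #X = lam ∧ dispersion X = lam ∧
      (∀ f : X → ℝ, Continuous f → ∃ c, ∀ x, f x = c) ∧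
      ¬ IsKResolvable X (Order.succ κ) := by
  classical
  have hκ : ℵ₀ ≤ κ := (Cardinal.aleph0_le_aleph 1).trans h1
  have hlam : ℵ₀ ≤ lam := hκ.trans h2.le
  obtain ⟨Z, tZ, hreg, hT1, hnt, hZc, hconst⟩ := exists_regular_const κ h1
  obtain ⟨z0, -⟩ := exists_pair_ne Z
  let _ : Zero Z := ⟨z0⟩
  obtain ⟨Λ, G₀, hΛ, hG₀, hsep, hsmall⟩ :=
    exists_start (K := lam.out) (Z := Z) lam hlam (by simp) (hZc.trans h2.le)
  obtain ⟨G, hGG, hmax⟩ := hG₀.exists_maximal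
  have hG : Indep G := hmax.prop
  -- no isolated points in `Z`
  have hiso : ¬ IsOpen ({0} : Set Z) := by
    intro ho
    obtain ⟨z1, hz1⟩ := exists_ne (0 : Z)
    have hclopen : IsClopen ({0} : Set Z) := ⟨isClosed_singleton, ho⟩
    obtain ⟨c, hc⟩ := hconst (Set.indicator {0} fun _ => 1) (continuous_const.indicator (by
      intro a ha
      rw [hclopen.frontier_eq] at ha
      exact ha.elim))
    have e1 := hc 0
    have e2 := hc z1
    simp [hz1] at e1 e2
    rw [← e2] at e1
    exact one_ne_zero e1
  -- the embedding of `Λ`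
  let e : Λ → (G → Z) := fun a g => g.1 a
  have he : Function.Injective e := by
    intro a b hab
    by_contra hne
    obtain ⟨g, hg, hgab⟩ := hsep a b hne
    exact hgab (congrFun hab ⟨g, hGG hg⟩)
  -- open sets are large
  have hlarge : ∀ O : Set (G → Z), IsOpen O → O.Nonempty → lam ≤ #(e ⁻¹' O) := by
    intro O hO hne
    by_contra hlt
    obtain ⟨g, hg, hg0⟩ := hsmall (e ⁻¹' O) (not_le.1 hlt)
    let g' : G := ⟨g, hGG hg⟩
    have hne' : (O ∩ {x | x g' ∈ ({0} : Set Z)ᶜ}).Nonempty := by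
      obtain ⟨x, hx⟩ := hne
      by_contra hemp
      have hsub : ∀ y ∈ O, y g' = 0 := by
        intro y hy
        by_contra hy0
        exact hemp ⟨y, hy, hy0⟩
      apply hiso
      have hcu : Continuous fun w : Z => Function.update x g' w :=
        continuous_const.update g' continuous_id
      have : (fun w : Z => Function.update x g' w) ⁻¹' O = {0} := by
        ext w
        constructor
        · intro hw
          have := hsub _ hw
          simpa using this
        · intro hw
          have hw : w = x g' := by rw [hsub x hx]; exact hw
          rw [Set.mem_preimage, hw, Function.update_eq_self]
          exact hx
      rw [← this]
      exact hO.preimage hcu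
    obtain ⟨a, ha, hane⟩ := hG.exists_mem _
      (hO.inter (isOpen_compl_singleton.preimage (continuous_apply g'))) hne'
    exact hane (hg0 a ha)
  -- the small dense set
  obtain ⟨c⟩ : Nonempty (G ↪ Set κ.out) := by
    rw [← Cardinal.le_def]
    refine (Cardinal.mk_set_le G).trans ?_
    rw [← Cardinal.power_def, hΛ, Cardinal.mk_set, Cardinal.mk_out, h3]
    calc #Z ^ lam ≤ (2 ^ lam) ^ lam :=
          Cardinal.power_le_power_right ((hZc.trans h2.le).trans (Cardinal.cantor lam).le)
      _ = 2 ^ lam := by rw [← Cardinal.power_mul, Cardinal.mul_eq_self hlam]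
  let P := Finset κ.out × (Finset κ.out →₀ Z)
  have hP : #P = κ := mk_index_le κ hκ (by simp) hZc
  let d : P → (G → Z) := fun q g => hfun (c g) q
  have hd : ∀ O : Set (G → Z), IsOpen O → O.Nonempty → ∃ q, d q ∈ O := by
    rintro O hO ⟨x, hx⟩
    obtain ⟨I, u, hu, hsub⟩ := isOpen_pi_iff.1 hO x hx
    obtain ⟨q, hq⟩ := hfun_indep (I.image c) (fun A => if h : ∃ g, c g = A then x h.choose else 0)
    refine ⟨q, hsub ?_⟩
    intro g hg
    have := hq (c g) (Finset.mem_image_of_mem _ hg)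
    have hex : ∃ g', c g' = c g := ⟨g, rfl⟩
    rw [dif_pos hex, c.injective hex.choose_spec] at this
    show hfun (c g) q ∈ u g
    rw [this]
    exact (hu g hg).2
  let X : Set (G → Z) := Set.range e ∪ Set.range d
  have heX : ∀ a, e a ∈ X := fun a => Or.inl ⟨a, rfl⟩
  have hdX : ∀ q, d q ∈ X := fun q => Or.inr ⟨q, rfl⟩
  have hXlarge : ∀ U : Set X, IsOpen U → U.Nonempty → lam ≤ #U := by
    rintro U hU ⟨x, hx⟩
    obtain ⟨O, hO, rfl⟩ := isOpen_induced_iff.1 hU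
    refine (hlarge O hO ⟨x, hx⟩).trans ?_
    refine Cardinal.mk_le_of_injective
      (f := fun a : e ⁻¹' O => (⟨⟨e a.1, heX a.1⟩, a.2⟩ : (Subtype.val ⁻¹' O : Set X))) ?_
    intro a b hab
    exact Subtype.ext (he (congrArg (fun t => t.1.1) hab))
  have hXle : #X ≤ lam := by
    refine (Cardinal.mk_union_le _ _).trans ?_
    refine (add_le_add (Cardinal.mk_range_le) (Cardinal.mk_range_le)).trans ?_
    rw [hΛ, hP]
    exact (add_le_add le_rfl h2.le).trans (Cardinal.add_eq_self hlam).le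
  have hXne : Nonempty X := ⟨⟨d (∅, 0), hdX _⟩⟩
  have hXeq : #X = lam := by
    refine le_antisymm hXle ?_
    have := hXlarge Set.univ isOpen_univ Set.univ_nonempty
    rwa [Cardinal.mk_univ] at this
  refine ⟨X, inferInstance, inferInstance, inferInstance, hXeq, ?_, ?_, ?_⟩
  · refine le_antisymm ?_ ?_
    · exact csInf_le' ⟨Set.univ, isOpen_univ, Set.univ_nonempty, by rw [Cardinal.mk_univ, hXeq]⟩
    · refine le_csInf ⟨_, Set.univ, isOpen_univ, Set.univ_nonempty, rfl⟩ ?_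
      rintro _ ⟨U, hU, hne, rfl⟩
      exact hXlarge U hU hne
  · intro f hf
    obtain ⟨r, hr⟩ := const_on_range hconst (fun g => c g) X hdX f hf
    refine ⟨r, fun x => ?_⟩
    by_contra hne
    have ho : IsOpen (f ⁻¹' {r}ᶜ) := isOpen_compl_singleton.preimage hf
    obtain ⟨O, hO, hOe⟩ := isOpen_induced_iff.1 ho
    have hxO : x.1 ∈ O := by
      have : x ∈ Subtype.val ⁻¹' O := by rw [hOe]; exact hne
      exact this
    obtain ⟨q, hq⟩ := hd O hO ⟨x.1, hxO⟩
    have : (⟨d q, hdX q⟩ : X) ∈ f ⁻¹' {r}ᶜ := by rw [← hOe]; exact hq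
    exact this (hr q)
  · rintro ⟨D, hDd, hDdis⟩
    -- indices of dense sets meeting the small set
    let bad : Set (Order.succ κ).out := {i | ∃ q, (⟨d q, hdX q⟩ : X) ∈ D i}
    have hbad : #bad ≤ κ := by
      refine le_trans ?_ hP.le
      refine Cardinal.mk_le_of_injective (f := fun i : bad => i.2.choose) ?_
      intro i i' h
      by_contra hne
      have hdis := hDdis (fun h => hne (Subtype.ext h) : i.1 ≠ i'.1)
      have m1 := i.2.choose_spec
      have m2 := i'.2.choose_spec
      simp only at h
      rw [← h] at m2
      exact Set.disjoint_left.1 hdis m1 m2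
    have hgood : κ ≤ #(badᶜ : Set (Order.succ κ).out) := by
      by_contra hlt
      have hsum := Cardinal.mk_sum_compl bad
      rw [Cardinal.mk_out] at hsum
      have : #bad + #(badᶜ : Set (Order.succ κ).out) ≤ κ :=
        (add_le_add hbad (not_le.1 hlt).le).trans (Cardinal.add_eq_self hκ).le
      rw [hsum] at this
      exact absurd (Order.lt_succ κ) (not_lt.2 this)
    obtain ⟨ψ⟩ : Nonempty (Z ↪ (badᶜ : Set (Order.succ κ).out)) := by
      rw [← Cardinal.le_def]
      exact hZc.trans hgood
    let B : Z → Set X := fun z => D (ψ z).1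
    have hBdis : ∀ z z' x, x ∈ B z → x ∈ B z' → z = z' := by
      intro z z' x hx hx'
      by_contra hne
      have : (ψ z).1 ≠ (ψ z').1 := fun h => hne (ψ.injective (Subtype.ext h))
      exact Set.disjoint_left.1 (hDdis this) hx hx'
    have hBmem : ∀ z (O : Set (G → Z)), IsOpen O → O.Nonempty →
        ∃ a, e a ∈ O ∧ (⟨e a, heX a⟩ : X) ∈ B z := by
      intro z O hO hne
      obtain ⟨q, hq⟩ := hd O hO hne
      obtain ⟨x, hxO, hxB⟩ := (hDd (ψ z).1).inter_open_nonempty (Subtype.val ⁻¹' O)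
        (hO.preimage continuous_subtype_val) ⟨⟨d q, hdX q⟩, hq⟩
      obtain ⟨x, hx | hx⟩ := x
      · obtain ⟨a, rfl⟩ := hx
        exact ⟨a, hxO, hxB⟩
      · obtain ⟨q, rfl⟩ := hx
        exact absurd ⟨q, hxB⟩ (ψ z).2
    let g : Λ → Z := fun a => if h : ∃ z, (⟨e a, heX a⟩ : X) ∈ B z then h.choose else 0
    have hg : ∀ a z, (⟨e a, heX a⟩ : X) ∈ B z → g a = z := by
      intro a z h
      have hex : ∃ z, (⟨e a, heX a⟩ : X) ∈ B z := ⟨z, h⟩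
      simp only [g, dif_pos hex]
      exact hBdis _ _ _ hex.choose_spec h
    have hind : Indep (insert g G) := by
      intro s hs U hU
      obtain ⟨z, hz⟩ : ∃ z, g ∈ s → z ∈ U g := by
        by_cases h : g ∈ s
        · obtain ⟨z, hz⟩ := (hU g h).2
          exact ⟨z, fun _ => hz⟩
        · exact ⟨0, fun h' => absurd h' h⟩
      let I : Finset G := Finset.subtype (· ∈ G) s
      have hmemI : ∀ f : G, f ∈ I ↔ f.1 ∈ s := fun f => Finset.mem_subtype
      let O : Set (G → Z) := (I : Set G).pi fun f => U f.1
      have hO : IsOpen O := isOpen_set_pi I.finite_toSet fun f hf => (hU f.1 ((hmemI f).1 hf)).1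
      have hOne : O.Nonempty := by
        refine ⟨fun f => if h : (U f.1).Nonempty then h.choose else 0, fun f hf => ?_⟩
        have hne := (hU f.1 ((hmemI f).1 hf)).2
        simp only [dif_pos hne]
        exact hne.choose_spec
      obtain ⟨a, haO, haB⟩ := hBmem z O hO hOne
      refine ⟨a, fun f hf => ?_⟩
      by_cases hfg : f = g
      · subst hfg
        rw [hg a z haB]
        exact hz hf
      · have hfG : f ∈ G := (hs hf).resolve_left hfg
        exact haO ⟨f, hfG⟩ ((hmemI _).2 hf)
    have hgG : g ∈ G := hmax.le_of_ge hind (Set.subset_insert g G) (Set.mem_insert g G)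
    obtain ⟨z1, hz1⟩ := exists_ne (0 : Z)
    obtain ⟨a, haO, haB⟩ := hBmem 0 {x | x ⟨g, hgG⟩ ∈ ({0} : Set Z)ᶜ}
      (isOpen_compl_singleton.preimage (continuous_apply _)) ⟨fun _ => z1, hz1⟩
    exact haO (hg a 0 haB)
end
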